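/- arXiv:2312.04762 — 11 statements merged into one kernel-verified Lean document; each statement's English description precedes it below -/
import Mathlib

section
/- Let $K_n$ be the complete graph on $n$ vertices. For each $n$, let $T_1$ and $T_2$ be two independent uniformly random spanning trees of $K_n$, and let $H_n = T_1 \cup T_2$ be the graph whose edge set is the union of their edge sets. Then there exists a constant $c > 0$ such that the probability that $H_n$ has vertex expansion at least $c$ (i.e., for every vertex set $S$ with $0 < |S| \le n/2$, the number of vertices outside $S$ adjacent in $H_n$ to some vertex of $S$ is at least $c\,|S|$) tends to $1$ as $n \to \infty$. -/
/-- `H` has vertex expansion at least `c`: for every nonempty vertex set `S` with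
`|S| ≤ n/2`, the number of vertices outside `S` adjacent in `H` to some vertex of `S`
is at least `c * |S|`. -/
def HasVertexExpansion {n : ℕ} (H : SimpleGraph (Fin n)) (c : ℝ) : Prop :=
  ∀ S : Finset (Fin n), 0 < S.card → (S.card : ℝ) ≤ (n : ℝ) / 2 →
    c * (S.card : ℝ) ≤ (({v : Fin n | v ∉ S ∧ ∃ u ∈ S, H.Adj u v}).ncard : ℝ)

open Finset

/-- `v` reaches the fixed point `r` of `f` under iteration of `f`. -/
inductive ReachRoot {V : Type*} (f : V → V) : V → V → Prop
  | root (r : V) : f r = r → ReachRoot f r r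
  | step (v r : V) : ReachRoot f (f v) r → ReachRoot f v r

/-- The graph with edges `v — f v`. -/
def pgraph {V : Type*} (f : V → V) : SimpleGraph V :=
  SimpleGraph.fromRel (fun a b => f a = b)

section Comb
variable {V : Type*} {f g : V → V}

lemma ReachRoot.fix {v r : V} (h : ReachRoot f v r) : f r = r := by
  induction h with
  | root r h => exact h
  | step v r _ ih => exact ih

lemma ReachRoot.eq_of_fix {v r : V} (h : ReachRoot f v r) : f v = v → v = r := by
  induction h with
  | root r h => intro _; rfl
  | step v r _ ih => intro hv; rw [hv] at ih; exact ih hv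

lemma ReachRoot.no_two {v r : V} (h : ReachRoot f v r) : f (f v) = v → f v = v := by
  induction h with
  | root r h => intro _; exact h
  | step v r _ ih =>
    intro hv
    have := ih (by rw [hv])
    rw [hv] at this
    exact this.symm

lemma pgraph_adj {a b : V} : (pgraph f).Adj a b ↔ a ≠ b ∧ (f a = b ∨ f b = a) := by
  simp [pgraph]

lemma pgraph_reach {v r : V} (h : ReachRoot f v r) : (pgraph f).Reachable v r := by
  induction h with
  | root r h => exact SimpleGraph.Reachable.refl _
  | step v r _ ih =>
    by_cases hv : f v = v
    · rw [hv] at ih; exact ih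
    · refine SimpleGraph.Reachable.trans (SimpleGraph.Adj.reachable ?_) ih
      rw [pgraph_adj]
      exact ⟨fun h => hv h.symm, Or.inl rfl⟩

lemma pgraph_connected {r : V} (h : ∀ v, ReachRoot f v r) : (pgraph f).Connected := by
  have : Nonempty V := ⟨r⟩
  exact ⟨fun a b => (pgraph_reach (h a)).trans (pgraph_reach (h b)).symm⟩

lemma pgraph_isTree [Fintype V] {r : V} (h : ∀ v, ReachRoot f v r) : (pgraph f).IsTree := by
  classical
  have hc := pgraph_connected h
  rw [SimpleGraph.isTree_iff_connected_and_card]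
  refine ⟨hc, le_antisymm ?_ hc.card_vert_le_card_edgeSet_add_one⟩
  have hsub : (pgraph f).edgeSet ⊆ ((univ.erase r).image (fun v => s(v, f v)) : Finset (Sym2 V)) := by
    intro e he
    induction e using Sym2.ind with
    | _ a b =>
      rw [SimpleGraph.mem_edgeSet, pgraph_adj] at he
      have hr := (h r).fix
      simp only [coe_image, Set.mem_image, mem_coe, mem_erase, mem_univ, and_true]
      obtain ⟨hne, h1 | h1⟩ := he
      · exact ⟨a, fun hh => hne (by rw [← h1, hh, hr]), by rw [h1]⟩
      · exact ⟨b, fun hh => hne (by rw [← h1, hh, hr]), by rw [h1, Sym2.eq_swap]⟩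
  have h1 := Set.ncard_le_ncard hsub (Finset.finite_toSet _)
  rw [Set.ncard_coe_finset] at h1
  have h2 := h1.trans card_image_le
  rw [card_erase_of_mem (mem_univ r), card_univ] at h2
  have : 0 < Fintype.card V := Fintype.card_pos_iff.2 ⟨r⟩
  rw [Nat.card_coe_set_eq, Nat.card_eq_fintype_card]
  omega

lemma pgraph_inj {r : V} (hf : ∀ v, ReachRoot f v r) (hg : ∀ v, ReachRoot g v r)
    (h : pgraph f = pgraph g) : f = g := by
  have hfr := (hf r).fix
  have hgr := (hg r).fix
  have key : ∀ v, (pgraph f).Adj v (f v) → g v = f v ∨ g (f v) = v := by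
    intro v hv
    rw [h, pgraph_adj] at hv
    exact hv.2
  have adj : ∀ v, v ≠ r → (pgraph f).Adj v (f v) := by
    intro v hv
    rw [pgraph_adj]
    exact ⟨fun hh => hv ((hf v).eq_of_fix hh.symm), Or.inl rfl⟩
  have main : ∀ v s, ReachRoot f v s → s = r → ¬ (v ≠ r ∧ g (f v) = v) := by
    intro v s hvs
    induction hvs with
    | root s hs => rintro rfl ⟨h1, _⟩; exact h1 rfl
    | step v s hv ih =>
      rintro rfl ⟨h1, h2⟩
      have h3 : f v ≠ s := by
        intro hh; rw [hh, hgr] at h2; exact h1 h2.symm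
      refine ih rfl ⟨h3, ?_⟩
      rcases key _ (adj _ h3) with h4 | h4
      · rw [h2] at h4
        exact absurd ((hf v).eq_of_fix ((hf v).no_two h4.symm)) h1
      · exact h4
  funext v
  by_cases hv : v = r
  · rw [hv, hfr, hgr]
  · rcases key v (adj v hv) with h4 | h4
    · exact h4.symm
    · exact absurd ⟨hv, h4⟩ (main v r (hf v) rfl)

/-- Every tree is the graph of a parent function. -/
lemma tree_parent {T : SimpleGraph V} (hT : T.IsTree) (r : V) :
    ∃ f : V → V, f r = r ∧ (∀ v, v ≠ r → T.Adj v (f v)) ∧ T = pgraph f := by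
  classical
  have h1 : ∀ v, v ≠ r → ∃ u, T.Adj v u ∧ T.dist u r < T.dist v r := by
    intro v hv
    obtain ⟨p, hp⟩ := hT.connected.exists_walk_length_eq_dist v r
    cases p with
    | nil => exact absurd rfl hv
    | cons hadj q =>
      refine ⟨_, hadj, ?_⟩
      have := SimpleGraph.dist_le q
      simp only [SimpleGraph.Walk.length_cons] at hp
      omega
  choose! F hF using h1
  let f : V → V := fun v => if v = r then r else F v
  have hfr : f r = r := by simp [f]
  have hfv : ∀ v, v ≠ r → T.Adj v (f v) ∧ T.dist (f v) r < T.dist v r := by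
    intro v hv; simp only [f, if_neg hv]; exact hF v hv
  refine ⟨f, hfr, fun v hv => (hfv v hv).1, ?_⟩
  have hreach : ∀ m, ∀ v, T.dist v r ≤ m → ReachRoot f v r := by
    intro m
    induction m with
    | zero =>
      intro v hv
      by_cases h : v = r
      · rw [h]; exact ReachRoot.root r hfr
      · have := (hfv v h).2; omega
    | succ m ih =>
      intro v hv
      by_cases h : v = r
      · rw [h]; exact ReachRoot.root r hfr
      · have := (hfv v h).2
        exact ReachRoot.step _ _ (ih _ (by omega))
  have hle : pgraph f ≤ T := by
    intro a b hab
    rw [pgraph_adj] at hab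
    obtain ⟨hne, h | h⟩ := hab
    · have : a ≠ r := by rintro rfl; exact hne (by rw [← h, hfr])
      rw [← h]; exact (hfv a this).1
    · have : b ≠ r := by rintro rfl; exact hne (by rw [← h, hfr])
      rw [← h]; exact (hfv b this).1.symm
  exact le_antisymm ((SimpleGraph.isTree_iff_minimal_connected.1 hT).2
    (pgraph_connected (fun v => hreach _ v le_rfl)) hle) hle

lemma attach_reach [DecidableEq V] {v r t : V} (hr : f r = r)
    (hv : ReachRoot f v t) (htr : t ≠ r) : ReachRoot (Function.update f r v) v t := by
  have gen : ∀ u s, ReachRoot f u s → s ≠ r → ReachRoot (Function.update f r v) u s := by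
    intro u s hu
    induction hu with
    | root s hs => intro h; exact ReachRoot.root _ (by rw [Function.update_of_ne h, hs])
    | step u s hu ih =>
      intro h
      have hur : u ≠ r := by
        rintro rfl
        rw [hr] at hu
        exact h (hu.eq_of_fix hr).symm
      apply ReachRoot.step
      rw [Function.update_of_ne hur]
      exact ih h
  exact gen v t hv htr

lemma attach_reach_all [DecidableEq V] {v r t : V} (hr : f r = r)
    (hv : ReachRoot f v t) (htr : t ≠ r) (hall : ∀ u, ∃ s, ReachRoot f u s) (u : V) :
    ∃ s, ReachRoot (Function.update f r v) u s := by
  have hv' := attach_reach hr hv htr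
  have hr' : ReachRoot (Function.update f r v) r t := by
    apply ReachRoot.step
    rw [Function.update_self]
    exact hv'
  obtain ⟨s, hs⟩ := hall u
  induction hs with
  | root s hs =>
    by_cases h : s = r
    · rw [h]; exact ⟨t, hr'⟩
    · exact ⟨s, ReachRoot.root _ (by rw [Function.update_of_ne h, hs])⟩
  | step u s hu ih =>
    by_cases h : u = r
    · rw [h]; exact ⟨t, hr'⟩
    · obtain ⟨s', hs'⟩ := ih
      refine ⟨s', ReachRoot.step _ _ ?_⟩
      rw [Function.update_of_ne h]
      exact hs'

end Comb

section Count
variable {V : Type*} [Fintype V] [DecidableEq V]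

/-- Fixed points. -/
def fixF (f : V → V) : Finset V := univ.filter (fun v => f v = v)

open Classical in
/-- Rooted forests with `k` roots. -/
noncomputable def forests (V : Type*) [Fintype V] [DecidableEq V] (k : ℕ) : Finset (V → V) :=
  univ.filter (fun f => (∀ u, ∃ s, ReachRoot f u s) ∧ (fixF f).card = k)

open Classical in
/-- Root of the component of `v`. -/
noncomputable def rootOf (f : V → V) (v : V) : V :=
  if h : ∃ s, ReachRoot f v s then h.choose else v

lemma rootOf_spec {f : V → V} {v : V} (h : ∃ s, ReachRoot f v s) : ReachRoot f v (rootOf f v) := by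
  rw [rootOf, dif_pos h]; exact h.choose_spec

lemma forests_step (k : ℕ) :
    Fintype.card V * k * (forests V (k+1)).card ≤ (Fintype.card V - k) * (forests V k).card := by
  classical
  let src : Finset (Σ _ : V → V, Σ _ : V, V) :=
    (forests V (k+1)).sigma (fun f => univ.sigma (fun v => (fixF f).erase (rootOf f v)))
  let tgt : Finset (Σ _ : V → V, V) := (forests V k).sigma (fun g => (fixF g)ᶜ)
  have hs : src.card = Fintype.card V * k * (forests V (k+1)).card := by
    simp only [src, card_sigma]
    rw [sum_congr rfl (g := fun _ => Fintype.card V * k)]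
    · simp [mul_comm]
    · intro f hf
      simp only [forests, mem_filter, mem_univ, true_and] at hf
      rw [sum_congr rfl (g := fun _ => k)]
      · simp
      · intro v _
        have := (rootOf_spec (hf.1 v)).fix
        rw [card_erase_of_mem (by simp [fixF, this]), hf.2]
        rfl
  have ht : tgt.card = (Fintype.card V - k) * (forests V k).card := by
    simp only [tgt, card_sigma]
    rw [sum_congr rfl (g := fun _ => Fintype.card V - k)]
    · simp [mul_comm]
    · intro f hf
      simp only [forests, mem_filter, mem_univ, true_and] at hf
      rw [card_compl, hf.2]
  rw [← hs, ← ht]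
  refine card_le_card_of_injOn (fun x => ⟨Function.update x.1 x.2.2 x.2.1, x.2.2⟩) ?_ ?_
  · rintro ⟨f, v, r⟩ hx
    simp only [src, coe_sigma, Set.mem_sigma_iff, mem_coe, mem_sigma, mem_univ, true_and, mem_erase] at hx
    obtain ⟨hf, hr, hr2⟩ := hx
    simp only [forests, mem_filter, mem_univ, true_and] at hf
    have hfr : f r = r := by simpa [fixF] using hr2
    have hv := rootOf_spec (hf.1 v)
    have hvr : v ≠ r := by
      rintro rfl
      exact hr (hv.eq_of_fix hfr)
    have hfix : fixF (Function.update f r v) = (fixF f).erase r := by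
      ext u
      simp only [fixF, mem_filter, mem_univ, true_and, mem_erase]
      by_cases h : u = r
      · subst h; simp [hvr]
      · simp [h]
    simp only [tgt, coe_sigma, Set.mem_sigma_iff, mem_coe, forests, mem_filter, mem_univ, true_and, mem_compl]
    refine ⟨⟨attach_reach_all hfr hv hr.symm hf.1, ?_⟩, ?_⟩
    · rw [hfix, card_erase_of_mem hr2, hf.2]; rfl
    · rw [hfix]; simp
  · rintro ⟨f, v, r⟩ hx ⟨f', v', r'⟩ hx' heq
    simp only [src, coe_sigma, Set.mem_sigma_iff, mem_coe, mem_sigma, mem_univ, true_and, mem_erase] at hx hx'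
    have hfr : f r = r := by simpa [fixF] using hx.2.2
    have hfr' : f' r' = r' := by simpa [fixF] using hx'.2.2
    simp only [Sigma.mk.injEq, heq_eq_eq] at heq
    obtain ⟨h1, rfl⟩ := heq
    have hvv : v = v' := by
      have := congrFun h1 r
      simpa using this
    have hff : f = f' := by
      funext u
      by_cases h : u = r
      · rw [h, hfr, hfr']
      · have := congrFun h1 u
        simpa [h] using this
    subst hvv; subst hff; rfl

lemma forests_count (j : ℕ) (hj : j + 1 ≤ Fintype.card V) :
    Fintype.card V ^ j * (Fintype.card V - 1).descFactorial j
      ≤ (forests V (Fintype.card V - j)).card * j.factorial := by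
  induction j with
  | zero =>
    simp only [pow_zero, Nat.descFactorial_zero, Nat.factorial_zero, mul_one, Nat.sub_zero]
    rw [Nat.one_le_iff_ne_zero, ← Nat.pos_iff_ne_zero, card_pos]
    refine ⟨id, ?_⟩
    simp only [forests, mem_filter, mem_univ, true_and]
    exact ⟨fun u => ⟨u, ReachRoot.root _ rfl⟩, by simp [fixF]⟩
  | succ j ih =>
    have ih := ih (by omega)
    have hs := forests_step (V := V) (Fintype.card V - (j+1))
    have e1 : Fintype.card V - (j+1) + 1 = Fintype.card V - j := by omega
    have e2 : Fintype.card V - (Fintype.card V - (j+1)) = j + 1 := by omega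
    rw [e1, e2] at hs
    rw [Nat.descFactorial_succ, Nat.factorial_succ, pow_succ]
    have e3 : Fintype.card V - 1 - j = Fintype.card V - (j+1) := by omega
    rw [e3]
    generalize Fintype.card V - (j+1) = m at *
    calc _ = (Fintype.card V ^ j * (Fintype.card V - 1).descFactorial j) * (Fintype.card V * m) := by ring
      _ ≤ ((forests V (Fintype.card V - j)).card * j.factorial) * (Fintype.card V * m) :=
          Nat.mul_le_mul_right _ ih
      _ = (Fintype.card V * m * (forests V (Fintype.card V - j)).card) * j.factorial := by ring
      _ ≤ ((j+1) * (forests V m).card) * j.factorial := Nat.mul_le_mul_right _ hs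
      _ = _ := by ring

/-- Lower bound in Cayley's formula. -/
lemma cayley_lower [Nonempty V] :
    Fintype.card V ^ (Fintype.card V - 1) ≤
      Fintype.card V * ({T : SimpleGraph V | T.IsTree}).ncard := by
  classical
  have hpos : 0 < Fintype.card V := Fintype.card_pos
  have h := forests_count (V := V) (Fintype.card V - 1) (by omega)
  rw [Nat.descFactorial_self] at h
  have h2 := Nat.le_of_mul_le_mul_right h (Nat.factorial_pos _)
  refine h2.trans ?_
  have e : Fintype.card V - (Fintype.card V - 1) = 1 := by omega
  rw [e]
  have hroot : ∀ f ∈ forests V 1, ∃ r, ∀ v, ReachRoot f v r := by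
    intro f hf
    simp only [forests, mem_filter, mem_univ, true_and] at hf
    obtain ⟨r, hr⟩ := card_eq_one.1 hf.2
    refine ⟨r, fun v => ?_⟩
    obtain ⟨s, hs⟩ := hf.1 v
    have : s ∈ fixF f := by simp [fixF, hs.fix]
    rw [hr, mem_singleton] at this
    rw [← this]; exact hs
  choose! ρ hρ using hroot
  have hfin : ({T : SimpleGraph V | T.IsTree}).Finite := Set.toFinite _
  have : (forests V 1).card ≤ ((univ : Finset V) ×ˢ hfin.toFinset).card := by
    refine card_le_card_of_injOn (fun f => (ρ f, pgraph f)) ?_ ?_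
    · intro f hf
      simp only [coe_product, Set.mem_prod, mem_coe, mem_univ, true_and, Set.Finite.mem_toFinset, Set.mem_ofPred_eq]
      exact pgraph_isTree (hρ f hf)
    · intro f hf g hg h
      simp only [Prod.mk.injEq] at h
      have h1 := hρ f hf
      rw [h.1] at h1
      exact pgraph_inj h1 (hρ g hg) h.2
  rw [card_product, card_univ, ← Set.ncard_eq_toFinset_card _ hfin] at this
  exact this

/-- Trees in which no edge leaves `S` other than into `W`. -/
def avoidTrees (S W : Finset V) : Set (SimpleGraph V) :=
  {T | T.IsTree ∧ ∀ u ∈ S, ∀ v, T.Adj u v → v ∈ S ∪ W}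

lemma avoidTrees_card (S W : Finset V) (hd : Disjoint S W) (hW : W.Nonempty) :
    (avoidTrees S W).ncard ≤ Fintype.card V ^ (W.card - 1) * (S.card + W.card) ^ S.card *
      (Fintype.card V - S.card) ^ (Fintype.card V - S.card - W.card) := by
  classical
  obtain ⟨r, hr⟩ := hW
  let A : V → Finset V := fun v => if v ∈ S then S ∪ W else if v ∈ W then
    (if v = r then {r} else univ) else Sᶜ
  have hex : ∀ T ∈ avoidTrees S W, ∃ f ∈ Fintype.piFinset A, pgraph f = T := by
    rintro T ⟨hT, hT2⟩
    obtain ⟨f, hfr, hadj, rfl⟩ := tree_parent hT r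
    refine ⟨f, ?_, rfl⟩
    rw [Fintype.mem_piFinset]
    intro v
    have hrS : r ∉ S := fun h => disjoint_left.1 hd h hr
    simp only [A]
    split_ifs with h1 h2 h3
    · exact hT2 v h1 _ (hadj v (by rintro rfl; exact hrS h1))
    · rw [h3, hfr]; simp
    · simp
    · rw [mem_compl]
      intro h4
      have hvr : v ≠ r := by rintro rfl; exact h2 hr
      have := hT2 _ h4 _ (hadj v hvr).symm
      simp [h1, h2] at this
  have h1 : avoidTrees S W ⊆ ((Fintype.piFinset A).image pgraph : Finset (SimpleGraph V)) := by
    intro T hT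
    obtain ⟨f, hf, rfl⟩ := hex T hT
    simp only [coe_image]
    exact ⟨f, hf, rfl⟩
  have h2 := Set.ncard_le_ncard h1 (Finset.finite_toSet _)
  rw [Set.ncard_coe_finset] at h2
  refine (h2.trans card_image_le).trans (le_of_eq ?_)
  rw [Fintype.card_piFinset]
  have hun : (univ : Finset V) = (S ∪ W) ∪ (S ∪ W)ᶜ := (union_compl _).symm
  rw [hun, prod_union disjoint_compl_right, prod_union hd]
  have p1 : ∏ v ∈ S, (A v).card = (S.card + W.card) ^ S.card := by
    rw [prod_congr rfl (g := fun _ => S.card + W.card), prod_const]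
    intro v hv; simp only [A, if_pos hv]; exact card_union_of_disjoint hd
  have p2 : ∏ v ∈ W, (A v).card = Fintype.card V ^ (W.card - 1) := by
    rw [← mul_prod_erase _ _ hr, prod_congr rfl (g := fun _ => Fintype.card V), prod_const,
      card_erase_of_mem hr]
    · have hrS : r ∉ S := fun h => disjoint_left.1 hd h hr
      simp [A, hrS, hr]
    · intro v hv
      rw [mem_erase] at hv
      have hvS : v ∉ S := fun h => disjoint_left.1 hd h hv.2
      simp [A, hvS, hv.1, hv.2]
  have p3 : ∏ v ∈ (S ∪ W)ᶜ, (A v).card = (Fintype.card V - S.card) ^ (Fintype.card V - S.card - W.card) := by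
    rw [prod_congr rfl (g := fun _ => Fintype.card V - S.card), prod_const, card_compl,
      card_union_of_disjoint hd, Nat.sub_sub]
    intro v hv
    simp only [mem_compl, mem_union, not_or] at hv
    simp only [A, if_neg hv.1, if_neg hv.2, card_compl]
  rw [p1, p2, p3]; ring

end Count

section Analysis

lemma choose_mul_pow_le_one (n s : ℕ) (hs : s ≤ n) (x : ℝ) (h0 : 0 ≤ x) (h1 : x ≤ 1) :
    (n.choose s : ℝ) * x ^ s * (1 - x) ^ (n - s) ≤ 1 := by
  have h := add_pow x (1 - x) n
  have e : x + (1 - x) = 1 := by ring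
  rw [e, one_pow] at h
  have h2 : 0 ≤ 1 - x := by linarith
  have := single_le_sum (f := fun m => x ^ m * (1 - x) ^ (n - m) * (n.choose m : ℝ))
    (s := range (n+1)) (fun i _ => by positivity) (mem_range.2 (Nat.lt_succ_of_le hs))
  refine le_trans (le_of_eq ?_) (le_of_le_of_eq this h.symm)
  ring

lemma choose_mul_pow_le_exp (n w : ℕ) (hw : w ≤ n) (y : ℝ) (h0 : 0 ≤ y) :
    (n.choose w : ℝ) * y ^ w ≤ Real.exp (n * y) := by
  have h := add_pow y 1 n
  have := single_le_sum (f := fun m => y ^ m * 1 ^ (n - m) * (n.choose m : ℝ))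
    (s := range (n+1)) (fun i _ => by positivity) (mem_range.2 (Nat.lt_succ_of_le hw))
  rw [← h] at this
  calc (n.choose w : ℝ) * y ^ w = y ^ w * 1 ^ (n - w) * (n.choose w : ℝ) := by rw [one_pow]; ring
    _ ≤ (y + 1) ^ n := this
    _ ≤ (Real.exp y) ^ n := pow_le_pow_left₀ (by linarith) (Real.add_one_le_exp y) n
    _ = _ := by rw [← Real.exp_nat_mul]

lemma u_bound (n s w : ℕ) (hw : w * 24 ≤ s) (hs0 : 0 < s) (hsn : 2 * s ≤ n) :
    ((n.choose w : ℝ) * (25/24) ^ (2*s) * ((s:ℝ)/n) ^ s) ^ 2 ≤ ((s:ℝ)/n) ^ s := by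
  have hn : (0:ℝ) < n := by exact_mod_cast (by omega : 0 < n)
  have hs : (0:ℝ) < s := by exact_mod_cast hs0
  obtain ⟨x, hx⟩ : ∃ x : ℝ, x = (s:ℝ)/n := ⟨_, rfl⟩
  have hx0 : 0 < x := by rw [hx]; positivity
  have hx1 : x ≤ 1/2 := by
    rw [hx, div_le_iff₀ hn]
    have : (2:ℝ) * s ≤ n := by exact_mod_cast hsn
    linarith
  have hnx : (n:ℝ) * x = s := by rw [hx]; field_simp
  rw [← hx]
  have hc := choose_mul_pow_le_exp n w (by omega) (x/24) (by positivity)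
  have hc2 : (n.choose w : ℝ) ≤ Real.exp (n * (x/24)) * (24/x) ^ w := by
    have e : (24/x) ^ w * (x/24) ^ w = 1 := by
      rw [← mul_pow]
      have : 24 / x * (x/24) = 1 := by field_simp
      rw [this, one_pow]
    calc (n.choose w : ℝ) = (n.choose w : ℝ) * (x/24) ^ w * (24/x) ^ w := by
          rw [mul_assoc, mul_comm ((x/24)^w), e, mul_one]
      _ ≤ _ := mul_le_mul_of_nonneg_right hc (by positivity)
  have hc3 : (n.choose w : ℝ) ^ 24 ≤ 3 ^ s * (24/x) ^ s := by
    calc (n.choose w : ℝ) ^ 24 ≤ (Real.exp (n * (x/24)) * (24/x) ^ w) ^ 24 :=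
          pow_le_pow_left₀ (by positivity) hc2 24
      _ = Real.exp 1 ^ s * (24/x) ^ (w * 24) := by
          rw [mul_pow, ← pow_mul, ← Real.exp_nat_mul, ← Real.exp_nat_mul]
          congr 2
          rw [← hnx]; push_cast; ring
      _ ≤ 3 ^ s * (24/x) ^ s := by
          have h3 : Real.exp 1 ≤ 3 := Real.exp_one_lt_three.le
          have h4 : 1 ≤ 24 / x := by rw [le_div_iff₀ hx0]; linarith
          gcongr
  have h25 : ((25/24 : ℝ)) ^ 48 ≤ 9 := by norm_num
  have key : (((n.choose w : ℝ) * (25/24) ^ (2*s) * x ^ s) ^ 2) ^ 12 ≤ (x ^ s) ^ 12 := by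
    calc (((n.choose w : ℝ) * (25/24) ^ (2*s) * x ^ s) ^ 2) ^ 12
        = (n.choose w : ℝ) ^ 24 * (((25/24) ^ 48) ^ s * (x ^ 24) ^ s) := by
          rw [mul_pow, mul_pow, mul_pow, mul_pow, ← pow_mul, ← pow_mul, ← pow_mul, ← pow_mul,
            ← pow_mul, ← pow_mul, ← pow_mul]
          ring_nf
      _ ≤ (3 ^ s * (24/x) ^ s) * (9 ^ s * (x ^ 24) ^ s) := by gcongr
      _ = (3 * (24/x) * (9 * x ^ 24)) ^ s := by rw [← mul_pow, ← mul_pow, ← mul_pow]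
      _ ≤ (x ^ 12) ^ s := by
          apply pow_le_pow_left₀ (by positivity)
          have h1 : x ^ 11 ≤ (1/2) ^ 11 := pow_le_pow_left₀ hx0.le hx1 11
          have e : 3 * (24/x) * (9 * x ^ 24) = (648 * x ^ 11) * x ^ 12 := by field_simp; norm_num
          rw [e]
          have : 648 * x ^ 11 ≤ 1 := by
            have : ((1/2 : ℝ)) ^ 11 = 1/2048 := by norm_num
            linarith
          have hp : 0 ≤ x ^ 12 := by positivity
          nlinarith
      _ = _ := by ring
  exact le_of_pow_le_pow_left₀ (by norm_num) (by positivity) key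

lemma t_bound (n s w : ℕ) (hw : w * 24 ≤ s) (hs0 : 0 < s) (hsn : 2 * s ≤ n) :
    (n.choose s : ℝ) * (n.choose w : ℝ) * ((((s + w : ℕ) : ℝ)/n) ^ s) ^ 2 *
      ((((n - s : ℕ) : ℝ)/n) ^ (n - s - w)) ^ 2
      ≤ (n.choose w : ℝ) * (25/24) ^ (2*s) * ((s:ℝ)/n) ^ s := by
  have hn : (0:ℝ) < n := by exact_mod_cast (by omega : 0 < n)
  have hs : (0:ℝ) < s := by exact_mod_cast hs0
  have e1 : (((n - s : ℕ) : ℝ)/n) = 1 - (s:ℝ)/n := by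
    rw [Nat.cast_sub (by omega)]; field_simp
  have e2 : ((s + w : ℕ) : ℝ)/n ≤ (25/24) * ((s:ℝ)/n) := by
    have : (w:ℝ) * 24 ≤ s := by exact_mod_cast hw
    rw [← mul_div_assoc]
    gcongr
    push_cast
    linarith
  rw [e1]
  obtain ⟨x, hx⟩ : ∃ x : ℝ, x = (s:ℝ)/n := ⟨_, rfl⟩
  have hx0 : 0 < x := by rw [hx]; positivity
  have hx1 : x ≤ 1/2 := by
    rw [hx, div_le_iff₀ hn]
    have : (2:ℝ) * s ≤ n := by exact_mod_cast hsn
    linarith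
  rw [← hx] at e2 ⊢
  have hb := choose_mul_pow_le_one n s (by omega) x hx0.le (by linarith)
  have h1x : 0 ≤ 1 - x := by linarith
  obtain ⟨m, hm⟩ : ∃ m, n - s = m + 2 * w := ⟨n - s - 2 * w, by omega⟩
  have hm2 : n - s - w = m + w := by omega
  rw [hm2]
  rw [hm] at hb
  calc (n.choose s : ℝ) * (n.choose w : ℝ) * ((((s + w : ℕ) : ℝ)/n) ^ s) ^ 2 *
      ((1 - x) ^ (m + w)) ^ 2
      ≤ (n.choose s : ℝ) * (n.choose w : ℝ) * (((25/24) * x) ^ s) ^ 2 *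
      ((1 - x) ^ (m + w)) ^ 2 := by gcongr
    _ = ((n.choose s : ℝ) * x ^ s * (1 - x) ^ (m + 2 * w)) *
        ((n.choose w : ℝ) * (25/24) ^ (2*s) * x ^ s * (1 - x) ^ m) := by ring
    _ ≤ 1 * ((n.choose w : ℝ) * (25/24) ^ (2*s) * x ^ s * 1) := by
        gcongr
        exact pow_le_one₀ h1x (by linarith)
    _ = _ := by ring

lemma small_bound : ∃ M : ℕ, ∀ n ≥ M, ∀ s : ℕ, 24 ≤ s → 2 * s ≤ n →
    ((s:ℝ)/n) ^ s ≤ (1 / (n:ℝ) ^ 4) ^ 2 := by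
  have ht := tendsto_pow_const_div_const_pow_of_one_lt 16 (r := (2:ℝ)) (by norm_num)
  have hev := ht.eventually (gt_mem_nhds (show (0:ℝ) < 1 by norm_num))
  obtain ⟨M, hM⟩ := Filter.eventually_atTop.1 hev
  refine ⟨M ^ 2, fun n hn s hs hsn => ?_⟩
  have hn0 : (0:ℝ) < n := by exact_mod_cast (by omega : 0 < n)
  have hn1 : (1:ℝ) ≤ n := by exact_mod_cast (by omega : 1 ≤ n)
  have hs0 : (0:ℝ) < s := by exact_mod_cast (by omega : 0 < s)
  by_cases hsq : s ^ 2 ≤ n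
  · have h1 : ((s:ℝ)/n) ^ 2 ≤ 1/n := by
      have : (s:ℝ)^2 ≤ n := by exact_mod_cast hsq
      rw [div_pow, div_le_div_iff₀ (by positivity) hn0]
      nlinarith
    refine le_of_pow_le_pow_left₀ (n := 2) (by norm_num) (by positivity) ?_
    calc (((s:ℝ)/n) ^ s) ^ 2 = (((s:ℝ)/n) ^ 2) ^ s := by rw [← pow_mul, ← pow_mul, mul_comm]
      _ ≤ (1/(n:ℝ)) ^ s := pow_le_pow_left₀ (by positivity) h1 s
      _ ≤ (1/(n:ℝ)) ^ 16 := by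
        apply pow_le_pow_of_le_one (by positivity) _ (by omega)
        rw [div_le_one hn0]; exact hn1
      _ = _ := by rw [one_div_pow, one_div_pow, one_div_pow]; ring
  · push Not at hsq
    have hMs : M ≤ s := by
      by_contra h
      push Not at h
      have : s ^ 2 ≤ M ^ 2 := Nat.pow_le_pow_left h.le 2
      omega
    have h1 := hM s hMs
    rw [div_lt_one (by positivity)] at h1
    have h2 : (n:ℝ) ^ 8 ≤ 2 ^ s := by
      have : (n:ℝ) ≤ (s:ℝ) ^ 2 := by exact_mod_cast hsq.le
      calc (n:ℝ) ^ 8 ≤ ((s:ℝ)^2)^8 := pow_le_pow_left₀ hn0.le this 8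
        _ = (s:ℝ)^16 := by ring
        _ ≤ _ := h1.le
    calc ((s:ℝ)/n) ^ s ≤ (1/2) ^ s := by
          apply pow_le_pow_left₀ (by positivity)
          rw [div_le_iff₀ hn0]
          have : (2:ℝ) * s ≤ n := by exact_mod_cast hsn
          linarith
      _ = 1 / 2 ^ s := by rw [one_div_pow]
      _ ≤ 1 / (n:ℝ) ^ 8 := by gcongr
      _ = _ := by rw [one_div_pow]; ring

end Analysis

section Assembly

/-- The bound on the number of trees avoiding a cut. -/
def aBound (n s : ℕ) : ℕ :=
  n ^ (s / 24 - 1) * (s + s / 24) ^ s * (n - s) ^ (n - s - s / 24)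

/-- Pairs of trees whose union is not expanding. -/
def badPairs (n : ℕ) : Set (SimpleGraph (Fin n) × SimpleGraph (Fin n)) :=
  {p | p.1.IsTree ∧ p.2.IsTree ∧ ¬ HasVertexExpansion (p.1 ⊔ p.2) (1/24)}

lemma exists_leaving {n : ℕ} {T : SimpleGraph (Fin n)} (hT : T.Connected) (S : Finset (Fin n))
    (h0 : S.Nonempty) (h1 : S ≠ univ) : ∃ u ∈ S, ∃ v, v ∉ S ∧ T.Adj u v := by
  by_contra hcon
  push Not at hcon
  obtain ⟨a, ha⟩ := h0
  apply h1
  rw [eq_univ_iff_forall]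
  intro b
  obtain ⟨p⟩ := hT.preconnected a b
  induction p with
  | nil => exact ha
  | cons hadj q ih =>
    apply ih
    by_contra hv
    exact hcon _ ha _ hv hadj

lemma bad_witness {n : ℕ} {p : SimpleGraph (Fin n) × SimpleGraph (Fin n)} (hp : p ∈ badPairs n) :
    ∃ s ∈ Icc 24 (n / 2), ∃ S ∈ powersetCard s (univ : Finset (Fin n)),
      ∃ W ∈ powersetCard (s / 24) Sᶜ, p.1 ∈ avoidTrees S W ∧ p.2 ∈ avoidTrees S W := by
  classical
  obtain ⟨h1, h2, h3⟩ := hp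
  rw [HasVertexExpansion] at h3
  push Not at h3
  obtain ⟨S, hS0, hSn, hlt⟩ := h3
  let N : Finset (Fin n) := univ.filter (fun v => v ∉ S ∧ ∃ u ∈ S, (p.1 ⊔ p.2).Adj u v)
  have hN : ({v : Fin n | v ∉ S ∧ ∃ u ∈ S, (p.1 ⊔ p.2).Adj u v}).ncard = N.card := by
    rw [← Set.ncard_coe_finset]
    congr 1
    ext v; simp [N]
  rw [hN] at hlt
  have hlt' : N.card * 24 < S.card := by
    have : (N.card : ℝ) * 24 < S.card := by linarith
    exact_mod_cast this
  have hSn' : 2 * S.card ≤ n := by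
    have : (2:ℝ) * S.card ≤ n := by linarith
    exact_mod_cast this
  have hSne : S ≠ univ := by
    rintro rfl
    rw [card_univ, Fintype.card_fin] at hSn' hS0
    omega
  have hNpos : 0 < N.card := by
    obtain ⟨u, hu, v, hv, hadj⟩ := exists_leaving h1.connected S (card_pos.1 hS0) hSne
    exact card_pos.2 ⟨v, by simp only [N, mem_filter, mem_univ, true_and]; exact ⟨hv, u, hu, Or.inl hadj⟩⟩
  have hNS : N ⊆ Sᶜ := by
    intro v hv
    simp only [N, mem_filter, mem_univ, true_and] at hv
    simpa using hv.1
  obtain ⟨W, hNW, hWS, hWc⟩ := exists_subsuperset_card_eq hNS (n := S.card / 24) (by omega)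
    (by rw [card_compl, Fintype.card_fin]; omega)
  refine ⟨S.card, by rw [mem_Icc]; omega, S, by simp [mem_powersetCard], W,
    by rw [mem_powersetCard]; exact ⟨hWS, hWc⟩, ⟨h1, ?_⟩, ⟨h2, ?_⟩⟩
  · intro u hu v hadj
    by_cases hv : v ∈ S
    · exact mem_union_left _ hv
    · refine mem_union_right _ (hNW ?_)
      simp only [N, mem_filter, mem_univ, true_and]; exact ⟨hv, u, hu, Or.inl hadj⟩
  · intro u hu v hadj
    by_cases hv : v ∈ S
    · exact mem_union_left _ hv
    · refine mem_union_right _ (hNW ?_)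
      simp only [N, mem_filter, mem_univ, true_and]; exact ⟨hv, u, hu, Or.inr hadj⟩

lemma bad_count (n : ℕ) : (badPairs n).ncard ≤
    ∑ s ∈ Icc 24 (n / 2), n.choose s * (n.choose (s / 24) * aBound n s ^ 2) := by
  classical
  let E : Finset (Fin n) → Finset (Fin n) → Finset (SimpleGraph (Fin n) × SimpleGraph (Fin n)) :=
    fun S W => (Set.toFinite (avoidTrees S W)).toFinset ×ˢ (Set.toFinite (avoidTrees S W)).toFinset
  have hsub : badPairs n ⊆ ((Icc 24 (n/2)).biUnion (fun s => (powersetCard s univ).biUnion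
      (fun S => (powersetCard (s / 24) Sᶜ).biUnion (fun W => E S W))) :
        Finset (SimpleGraph (Fin n) × SimpleGraph (Fin n))) := by
    intro p hp
    obtain ⟨s, hs, S, hS, W, hW, h1, h2⟩ := bad_witness hp
    rw [mem_coe, mem_biUnion]
    refine ⟨s, hs, ?_⟩
    rw [mem_biUnion]
    refine ⟨S, hS, ?_⟩
    rw [mem_biUnion]
    refine ⟨W, hW, ?_⟩
    simp only [E, mem_product, Set.Finite.mem_toFinset]
    exact ⟨h1, h2⟩
  have h1 := Set.ncard_le_ncard hsub (Finset.finite_toSet _)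
  rw [Set.ncard_coe_finset] at h1
  refine h1.trans (card_biUnion_le.trans (sum_le_sum fun s hs => ?_))
  rw [mem_Icc] at hs
  have hcs : (powersetCard s (univ : Finset (Fin n))).card = n.choose s := by
    rw [card_powersetCard, card_univ, Fintype.card_fin]
  rw [← hcs]
  refine card_biUnion_le_card_mul _ _ _ fun S hS => ?_
  rw [mem_powersetCard] at hS
  have hcw : (powersetCard (s / 24) Sᶜ).card ≤ n.choose (s / 24) := by
    rw [card_powersetCard, card_compl, Fintype.card_fin]
    exact Nat.choose_le_choose _ (Nat.sub_le _ _)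
  refine (card_biUnion_le_card_mul _ _ (aBound n s ^ 2) fun W hW => ?_).trans
    (Nat.mul_le_mul_right _ hcw)
  rw [mem_powersetCard] at hW
  have hd : Disjoint S W := disjoint_left.2 fun v h1 h2 => by
    have := hW.1 h2
    rw [mem_compl] at this
    exact this h1
  have hWne : W.Nonempty := by
    rw [← card_pos, hW.2]; omega
  have := avoidTrees_card S W hd hWne
  rw [hS.2, hW.2, Fintype.card_fin] at this
  simp only [E, card_product]
  rw [← Set.ncard_eq_toFinset_card, sq]
  exact Nat.mul_le_mul this this

lemma aBound_eq (n s : ℕ) (hs : 24 ≤ s) (hsn : 2 * s ≤ n) :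
    (aBound n s : ℝ) = (n:ℝ) ^ (n - 1) * ((((s + s/24 : ℕ) : ℝ)/n) ^ s *
      (((n - s : ℕ) : ℝ)/n) ^ (n - s - s/24)) := by
  have hn : (n:ℝ) ≠ 0 := by
    have : n ≠ 0 := by omega
    exact_mod_cast this
  have e : n - 1 = (s/24 - 1) + s + (n - s - s/24) := by omega
  rw [e, pow_add, pow_add, div_pow, div_pow, aBound]
  push_cast
  field_simp

lemma bad_ratio : ∃ M : ℕ, ∀ n ≥ M,
    ((badPairs n).ncard : ℝ) / (({T : SimpleGraph (Fin n) | T.IsTree}).ncard : ℝ) ^ 2 ≤ 1 / n := by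
  obtain ⟨M, hM⟩ := small_bound
  refine ⟨M + 1, fun n hn => ?_⟩
  have hn0 : (0:ℝ) < n := by exact_mod_cast (by omega : 0 < n)
  have : Nonempty (Fin n) := ⟨⟨0, by omega⟩⟩
  have hcay := cayley_lower (V := Fin n)
  rw [Fintype.card_fin] at hcay
  have hcay' : (n:ℝ) ^ (n-1) ≤ n * (({T : SimpleGraph (Fin n) | T.IsTree}).ncard : ℝ) := by
    exact_mod_cast hcay
  generalize (({T : SimpleGraph (Fin n) | T.IsTree}).ncard : ℝ) = N at hcay'
  have hNpos : 0 < N := by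
    have : 0 < (n:ℝ) * N := lt_of_lt_of_le (by positivity) hcay'
    exact pos_of_mul_pos_right this hn0.le
  have hterm : ∀ s ∈ Icc 24 (n / 2),
      ((n.choose s * (n.choose (s / 24) * aBound n s ^ 2) : ℕ) : ℝ) ≤ N ^ 2 * (1 / (n:ℝ) ^ 2) := by
    intro s hs
    rw [mem_Icc] at hs
    have hsn : 2 * s ≤ n := by omega
    have hw : s / 24 * 24 ≤ s := Nat.div_mul_le_self _ _
    have ht := t_bound n s (s/24) hw (by omega) hsn
    have hu := u_bound n s (s/24) hw (by omega) hsn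
    have hm := hM n (by omega) s hs.1 hsn
    have hu2 := le_of_pow_le_pow_left₀ (by norm_num) (by positivity) (hu.trans hm)
    have ht2 := ht.trans hu2
    push_cast only [Nat.cast_mul, Nat.cast_pow]
    rw [aBound_eq n s hs.1 hsn]
    calc _ = ((n:ℝ) ^ (n-1)) ^ 2 * ((n.choose s : ℝ) * (n.choose (s/24) : ℝ) *
            ((((s + s/24 : ℕ) : ℝ)/n) ^ s) ^ 2 *
            ((((n - s : ℕ) : ℝ)/n) ^ (n - s - s/24)) ^ 2) := by ring
      _ ≤ (n * N) ^ 2 * (1 / (n:ℝ) ^ 4) := by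
          apply mul_le_mul _ ht2 (by positivity) (by positivity)
          exact pow_le_pow_left₀ (by positivity) hcay' 2
      _ = _ := by field_simp
  have hb : ((badPairs n).ncard : ℝ) ≤
      ((∑ s ∈ Icc 24 (n / 2), n.choose s * (n.choose (s / 24) * aBound n s ^ 2) : ℕ) : ℝ) := by
    exact_mod_cast bad_count n
  rw [Nat.cast_sum] at hb
  have h2 := hb.trans (sum_le_sum hterm)
  rw [sum_const, nsmul_eq_mul] at h2
  have hcard : ((Icc 24 (n/2)).card : ℝ) ≤ n := by
    rw [Nat.card_Icc]
    exact_mod_cast (by omega : n / 2 + 1 - 24 ≤ n)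
  have h3 : ((badPairs n).ncard : ℝ) ≤ n * (N ^ 2 * (1 / (n:ℝ) ^ 2)) :=
    h2.trans (mul_le_mul_of_nonneg_right hcard (by positivity))
  rw [div_le_iff₀ (by positivity)]
  refine h3.trans (le_of_eq ?_)
  field_simp

lemma good_add_bad (n : ℕ) :
    ({p : SimpleGraph (Fin n) × SimpleGraph (Fin n) |
                p.1.IsTree ∧ p.2.IsTree ∧ HasVertexExpansion (p.1 ⊔ p.2) (1/24)}).ncard
      + (badPairs n).ncard = ({T : SimpleGraph (Fin n) | T.IsTree}).ncard ^ 2 := by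
  rw [← Set.ncard_union_eq, sq, ← Set.ncard_prod]
  · congr 1
    ext p
    simp only [badPairs, Set.mem_union, Set.mem_ofPred_eq, Set.mem_prod]
    tauto
  · rw [Set.disjoint_left]
    rintro p ⟨_, _, h⟩ ⟨_, _, h'⟩
    exact h' h

end Assembly

/-- **Union of two uniformly random spanning trees of `K n` is an expander whp.**
A spanning tree of the complete graph `⊤ : SimpleGraph (Fin n)` is precisely a
`T : SimpleGraph (Fin n)` with `T.IsTree`.  Picking two such trees independently and
uniformly at random, the probability that their union has vertex expansion at least `c`
is the number of favourable pairs divided by the squared number of spanning trees; this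
probability tends to `1` as `n → ∞`, for some constant `c > 0`. -/
theorem union_two_random_spanning_trees_expander :
    ∃ c : ℝ, 0 < c ∧
      Filter.Tendsto
        (fun n : ℕ =>
          (({p : SimpleGraph (Fin n) × SimpleGraph (Fin n) |
                p.1.IsTree ∧ p.2.IsTree ∧ HasVertexExpansion (p.1 ⊔ p.2) c}).ncard : ℝ) /
            ((({T : SimpleGraph (Fin n) | T.IsTree}).ncard : ℝ)) ^ 2)
        Filter.atTop (nhds 1) := by
  refine ⟨1/24, by norm_num, ?_⟩
  obtain ⟨M, hM⟩ := bad_ratio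
  have hlow : Filter.Tendsto (fun n : ℕ => 1 - 1 / (n:ℝ)) Filter.atTop (nhds 1) := by
    simpa using tendsto_one_div_atTop_nhds_zero_nat.const_sub (1:ℝ)
  have hid : ∀ n ≥ M + 1,
      (({p : SimpleGraph (Fin n) × SimpleGraph (Fin n) |
          p.1.IsTree ∧ p.2.IsTree ∧ HasVertexExpansion (p.1 ⊔ p.2) (1/24)}).ncard : ℝ) /
            ((({T : SimpleGraph (Fin n) | T.IsTree}).ncard : ℝ)) ^ 2
      = 1 - ((badPairs n).ncard : ℝ) / (({T : SimpleGraph (Fin n) | T.IsTree}).ncard : ℝ) ^ 2 := by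
    intro n hn
    have h := good_add_bad n
    have hpos : (({T : SimpleGraph (Fin n) | T.IsTree}).ncard : ℝ) ≠ 0 := by
      have : Nonempty (Fin n) := ⟨⟨0, by omega⟩⟩
      have hcay := cayley_lower (V := Fin n)
      rw [Fintype.card_fin] at hcay
      have h0 : 0 < n ^ (n-1) := Nat.pow_pos (by omega)
      have : ({T : SimpleGraph (Fin n) | T.IsTree}).ncard ≠ 0 := by
        intro h; rw [h] at hcay; omega
      exact_mod_cast this
    have h' := congrArg (Nat.cast : ℕ → ℝ) h
    rw [Nat.cast_add, Nat.cast_pow] at h'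
    rw [eq_sub_iff_add_eq, ← add_div, h', div_self (pow_ne_zero 2 hpos)]
  refine tendsto_of_tendsto_of_tendsto_of_le_of_le' hlow tendsto_const_nhds ?_ ?_
  · filter_upwards [Filter.eventually_ge_atTop (M+1)] with n hn
    rw [hid n hn]
    have := hM n (by omega)
    linarith
  · filter_upwards [Filter.eventually_ge_atTop (M+1)] with n hn
    rw [hid n hn]
    have : 0 ≤ ((badPairs n).ncard : ℝ) / (({T : SimpleGraph (Fin n) | T.IsTree}).ncard : ℝ) ^ 2 := by
      positivity
    linarith
end

section
/- Let $G$ be a finite simple connected graph with at least two vertices, let $\tilde{L} = I - D^{-1/2} A D^{-1/2}$ be its normalized Laplacian, and let $\lambda_2$ be the second smallest eigenvalue of $\tilde{L}$. Then $\lambda_2 / 2 \le h(G)$, where $h(G)$ is the Cheeger constant of $G$. -/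
open Finset

/-- The normalized Laplacian `I - D^{-1/2} A D^{-1/2}` of a finite simple graph. -/
noncomputable def normLapMatrix {n : ℕ} (G : SimpleGraph (Fin n)) [DecidableRel G.Adj] :
    Matrix (Fin n) (Fin n) ℝ :=
  1 - Matrix.diagonal (fun v => (Real.sqrt (G.degree v))⁻¹) * G.adjMatrix ℝ *
      Matrix.diagonal (fun v => (Real.sqrt (G.degree v))⁻¹)

lemma cheeger_spec {n : ℕ} (L : Matrix (Fin n) (Fin n) ℝ) (hL : L.IsHermitian) (i0 : Fin n) (l : ℝ)
    (h : ∀ i, i ≠ i0 → l ≤ hL.eigenvalues i) (z : Fin n → ℝ)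
    (hz : (hL.eigenvectorBasis i0 : Fin n → ℝ) ⬝ᵥ z = 0) :
    l * ∑ v, z v ^ 2 ≤ z ⬝ᵥ (L.mulVec z) := by
  have key : ∀ x y : Fin n → ℝ, ∑ i, ((hL.eigenvectorBasis i : Fin n → ℝ) ⬝ᵥ x) *
      ((hL.eigenvectorBasis i : Fin n → ℝ) ⬝ᵥ y) = x ⬝ᵥ y := by
    intro x y
    have := hL.eigenvectorBasis.sum_inner_mul_inner (WithLp.toLp 2 x) (WithLp.toLp 2 y)
    simp only [EuclideanSpace.inner_eq_star_dotProduct, star_trivial] at this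
    rw [dotProduct_comm x y, ← this]
    refine Finset.sum_congr rfl fun i _ => ?_
    rw [dotProduct_comm y]
  have h1 : ∀ i, (hL.eigenvectorBasis i : Fin n → ℝ) ⬝ᵥ (L.mulVec z) =
      hL.eigenvalues i * ((hL.eigenvectorBasis i : Fin n → ℝ) ⬝ᵥ z) := by
    intro i
    have hT : L.transpose = L := by simpa using hL.eq
    rw [Matrix.dotProduct_mulVec, ← Matrix.mulVec_transpose, hT, hL.mulVec_eigenvectorBasis,
      smul_dotProduct, smul_eq_mul]
  have h2 : ∑ v, z v ^ 2 = z ⬝ᵥ z := by simp [dotProduct, sq]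
  rw [h2, ← key z z, ← key z (L.mulVec z), Finset.mul_sum]
  refine Finset.sum_le_sum fun i _ => ?_
  rw [h1]
  by_cases hi : i = i0
  · subst hi; rw [hz]; simp
  · nlinarith [mul_le_mul_of_nonneg_right (h i hi)
      (mul_self_nonneg ((hL.eigenvectorBasis i : Fin n → ℝ) ⬝ᵥ z))]

lemma cheeger_quad {n : ℕ} (G : SimpleGraph (Fin n)) [DecidableRel G.Adj]
    (hd : ∀ v, 0 < (G.degree v : ℝ)) (S : Finset (Fin n)) (a b : ℝ) (z : Fin n → ℝ)
    (hz : z = fun v => Real.sqrt (G.degree v) * (if v ∈ S then a else b)) :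
    z ⬝ᵥ ((normLapMatrix G).mulVec z) = (a - b) ^ 2 * ((Finset.univ.filter
          (fun p : Fin n × Fin n => G.Adj p.1 p.2 ∧ p.1 ∈ S ∧ p.2 ∉ S)).card : ℝ) := by
  set f : Fin n → ℝ := fun v => if v ∈ S then a else b with hf
  set A : Fin n → Fin n → ℝ := fun v w => if G.Adj v w then 1 else 0 with hA
  have hsymm : ∀ v w, A v w = A w v := fun v w => by simp [hA, G.adj_comm]
  have hdeg : ∀ v, (G.degree v : ℝ) = ∑ w, A v w := by
    intro v
    simp [hA, ← SimpleGraph.card_neighborFinset_eq_degree, SimpleGraph.neighborFinset_eq_filter]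
  have hs : ∀ v, Real.sqrt (G.degree v) ≠ 0 := fun v => (Real.sqrt_pos.2 (hd v)).ne'
  have e1 : z ⬝ᵥ ((normLapMatrix G).mulVec z) =
      ∑ v, ∑ w, A v w * f v ^ 2 - ∑ v, ∑ w, A v w * (f v * f w) := by
    rw [normLapMatrix, Matrix.sub_mulVec, dotProduct_sub, Matrix.one_mulVec]
    congr 1
    · refine Finset.sum_congr rfl fun v _ => ?_
      rw [← Finset.sum_mul, ← hdeg, hz]
      have := Real.mul_self_sqrt (hd v).le
      show Real.sqrt (G.degree v) * f v * (Real.sqrt (G.degree v) * f v) = _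
      linear_combination f v ^ 2 * this
    · refine Finset.sum_congr rfl fun v _ => ?_
      rw [Matrix.mulVec, dotProduct, Finset.mul_sum]
      refine Finset.sum_congr rfl fun w _ => ?_
      rw [Matrix.mul_diagonal, Matrix.diagonal_mul, SimpleGraph.adjMatrix_apply, hz]
      show Real.sqrt (G.degree v) * f v * ((Real.sqrt (G.degree v))⁻¹ * A v w *
        (Real.sqrt (G.degree w))⁻¹ * (Real.sqrt (G.degree w) * f w)) = _
      have := hs v
      have := hs w
      field_simp
  have e2 : ((Finset.univ.filter
          (fun p : Fin n × Fin n => G.Adj p.1 p.2 ∧ p.1 ∈ S ∧ p.2 ∉ S)).card : ℝ) =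
      ∑ v, ∑ w, A v w * (if v ∈ S ∧ w ∉ S then 1 else 0) := by
    rw [← Fintype.sum_prod_type', Finset.card_filter]
    push_cast
    refine Finset.sum_congr rfl fun p _ => ?_
    simp only [hA]
    split_ifs <;> simp_all
  have e3 : ∑ v, ∑ w, A v w * f v ^ 2 = ∑ v, ∑ w, A v w * f w ^ 2 := by
    rw [Finset.sum_comm]
    exact Finset.sum_congr rfl fun v _ => Finset.sum_congr rfl fun w _ => by rw [hsymm]
  have e4 : ∑ v, ∑ w, A v w * (if v ∈ S ∧ w ∉ S then (1 : ℝ) else 0) =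
      ∑ v, ∑ w, A v w * (if w ∈ S ∧ v ∉ S then (1 : ℝ) else 0) := by
    rw [Finset.sum_comm]
    exact Finset.sum_congr rfl fun v _ => Finset.sum_congr rfl fun w _ => by rw [hsymm]
  have e5 : ∑ v, ∑ w, A v w * f v ^ 2 + ∑ v, ∑ w, A v w * f w ^ 2
      - 2 * ∑ v, ∑ w, A v w * (f v * f w) =
      (a - b) ^ 2 * (∑ v, ∑ w, A v w * (if v ∈ S ∧ w ∉ S then (1 : ℝ) else 0) +
        ∑ v, ∑ w, A v w * (if w ∈ S ∧ v ∉ S then (1 : ℝ) else 0)) := by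
    simp only [Finset.mul_sum, ← Finset.sum_add_distrib, ← Finset.sum_sub_distrib]
    refine Finset.sum_congr rfl fun v _ => Finset.sum_congr rfl fun w _ => ?_
    simp only [hf]
    by_cases h1 : v ∈ S <;> by_cases h2 : w ∈ S <;> simp [h1, h2] <;> ring
  rw [e1, e2]
  rw [← e3, ← e4] at e5
  linarith

/-- **Cheeger inequality (easy direction).**  For a finite simple connected graph on at
least two vertices with second smallest normalized-Laplacian eigenvalue `λ₂` (here `μ` is
a monotone enumeration of the eigenvalues, so `λ₂ = μ 1`), every nonempty vertex set `S`
with `vol S ≤ vol V / 2` satisfies `λ₂ / 2 ≤ e(S, Sᶜ) / vol S`; that is,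
`λ₂ / 2 ≤ h(G)`. -/
theorem cheeger_lower_bound {n : ℕ} (hn : 1 < n) (G : SimpleGraph (Fin n))
    [DecidableRel G.Adj] (hG : G.Connected)
    (hL : (normLapMatrix G).IsHermitian)
    (μ : Fin n → ℝ) (hmono : Monotone μ)
    (hperm : ∃ σ : Equiv.Perm (Fin n), hL.eigenvalues ∘ σ = μ)
    (S : Finset (Fin n)) (hS : S.Nonempty)
    (hvol : (∑ v ∈ S, (G.degree v : ℝ)) ≤ (∑ v : Fin n, (G.degree v : ℝ)) / 2) :
    μ ⟨1, hn⟩ / 2 ≤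
      ((Finset.univ.filter
          (fun p : Fin n × Fin n => G.Adj p.1 p.2 ∧ p.1 ∈ S ∧ p.2 ∉ S)).card : ℝ) /
        (∑ v ∈ S, (G.degree v : ℝ)) := by
  obtain ⟨σ, hσ⟩ := hperm
  have : Nontrivial (Fin n) := Fin.nontrivial_iff_two_le.2 hn
  have hd : ∀ v, 0 < (G.degree v : ℝ) := fun v => by
    exact_mod_cast hG.preconnected.degree_pos_of_nontrivial v
  have hVS : 0 < ∑ v ∈ S, (G.degree v : ℝ) := Finset.sum_pos (fun v _ => hd v) hS
  set VS := ∑ v ∈ S, (G.degree v : ℝ) with hVSd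
  have hspec : ∀ i, i ≠ σ ⟨0, by omega⟩ → μ ⟨1, hn⟩ ≤ hL.eigenvalues i := by
    intro i hi
    have h1 : hL.eigenvalues i = μ (σ.symm i) := by rw [← hσ]; simp
    rw [h1]
    apply hmono
    rw [Fin.le_def]
    by_contra hc
    apply hi
    rw [← Equiv.symm_apply_eq]
    ext
    simp at hc ⊢
    omega
  set i0 := σ ⟨0, by omega⟩
  rcases lt_or_ge (μ ⟨1, hn⟩) 0 with hneg | hnn
  · exact le_trans (b := 0) (by linarith) (by positivity)
  set p := (hL.eigenvectorBasis i0 : Fin n → ℝ) ⬝ᵥ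
    (fun v => Real.sqrt (G.degree v) * (if v ∈ S then 1 else 0)) with hp
  set q := (hL.eigenvectorBasis i0 : Fin n → ℝ) ⬝ᵥ
    (fun v => Real.sqrt (G.degree v) * (if v ∈ S then 0 else 1)) with hq
  obtain ⟨a, b, hab, hpos⟩ : ∃ a b : ℝ, a * p + b * q = 0 ∧ 0 < a ^ 2 + b ^ 2 := by
    by_cases h : p = 0
    · exact ⟨1, 0, by simp [h], by norm_num⟩
    · exact ⟨q, -p, by ring, by have : 0 < p ^ 2 := by positivity
                                nlinarith [sq_nonneg q]⟩
  set z : Fin n → ℝ := fun v => Real.sqrt (G.degree v) * (if v ∈ S then a else b) with hz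
  have hz0 : (hL.eigenvectorBasis i0 : Fin n → ℝ) ⬝ᵥ z = 0 := by
    rw [← hab, hp, hq]
    simp only [dotProduct, Finset.mul_sum, ← Finset.sum_add_distrib]
    refine Finset.sum_congr rfl fun v _ => ?_
    simp only [hz]
    split_ifs <;> ring
  have main := cheeger_spec _ hL i0 _ hspec z hz0
  rw [cheeger_quad G hd S a b z hz] at main
  have hnorm : ∑ v, z v ^ 2 = a ^ 2 * VS + b ^ 2 * ∑ v ∈ Sᶜ, (G.degree v : ℝ) := by
    rw [← Finset.sum_add_sum_compl S, hVSd, Finset.mul_sum, Finset.mul_sum]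
    congr 1 <;> refine Finset.sum_congr rfl fun v hv => ?_
    · simp only [hz, if_pos hv, mul_pow, Real.sq_sqrt (hd v).le]; ring
    · simp only [hz, if_neg (Finset.mem_compl.1 hv), mul_pow, Real.sq_sqrt (hd v).le]; ring
  rw [← Finset.sum_add_sum_compl S, ← hVSd] at hvol
  rw [hnorm] at main
  set e := ((Finset.univ.filter
          (fun p : Fin n × Fin n => G.Adj p.1 p.2 ∧ p.1 ∈ S ∧ p.2 ∉ S)).card : ℝ)
  have he : 0 ≤ e := by positivity
  have h1 : (a ^ 2 + b ^ 2) * VS ≤ a ^ 2 * VS + b ^ 2 * ∑ v ∈ Sᶜ, (G.degree v : ℝ) := by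
    nlinarith [sq_nonneg b]
  have h2 := mul_le_mul_of_nonneg_left h1 hnn
  have h3 : (a - b) ^ 2 * e ≤ (2 * (a ^ 2 + b ^ 2)) * e :=
    mul_le_mul_of_nonneg_right (by nlinarith [sq_nonneg (a + b)]) he
  rw [le_div_iff₀ hVS]
  refine le_of_mul_le_mul_left ?_ hpos
  linarith
end

section
/- Let $G$ be a finite simple connected graph with at least two vertices, let $\tilde{L} = I - D^{-1/2} A D^{-1/2}$ be its normalized Laplacian, and let $\lambda_2$ be the second smallest eigenvalue of $\tilde{L}$. Then $h(G) \le \sqrt{2 \lambda_2}$, where $h(G)$ is the Cheeger constant of $G$. -/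
open Finset

namespace CheegerAux

variable {ι : Type*} [Fintype ι] [DecidableEq ι]

/-- Weight of the cut of `S`. -/
noncomputable def cut (A : ι → ι → ℝ) (S : Finset ι) : ℝ :=
  ∑ u, ∑ v, A u v * (if u ∈ S ∧ v ∉ S then 1 else 0)

theorem coarea (A : ι → ι → ℝ) (d : ι → ℝ) (α : ℝ) (k : ℕ) :
    ∀ (F : ι → ℝ), (∀ u, 0 ≤ F u) → (univ.filter (fun u => 0 < F u)).card = k →
    (∀ S : Finset ι, S.Nonempty → (∀ u ∈ S, 0 < F u) → α * ∑ u ∈ S, d u < cut A S) →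
    F = 0 ∨ α * ∑ u, d u * F u < ∑ u, ∑ v, A u v * max (F u - F v) 0 := by
  induction k using Nat.strong_induction_on with
  | _ k ih =>
  intro F hF hk hS
  set S := univ.filter (fun u => 0 < F u) with hSdef
  have memS : ∀ u, u ∈ S ↔ 0 < F u := by intro u; simp [hSdef]
  by_cases hne : S.Nonempty
  swap
  · left
    ext u
    have : u ∉ S := by
      rw [Finset.not_nonempty_iff_eq_empty] at hne
      simp [hne]
    rw [memS] at this
    exact le_antisymm (not_lt.mp this) (hF u)
  right
  obtain ⟨w, hw, hmin⟩ := S.exists_min_image F hne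
  set m := F w with hm
  have hmpos : 0 < m := (memS w).1 hw
  set F' : ι → ℝ := fun u => F u - m * (if u ∈ S then 1 else 0) with hF'
  have hF'0 : ∀ u, 0 ≤ F' u := by
    intro u
    by_cases hu : u ∈ S
    · simp [hF', hu, hmin u hu]
    · simp [hF', hu, hF u]
  have hpos : ∀ u, 0 < F' u → 0 < F u := by
    intro u hu
    by_cases h : u ∈ S
    · exact (memS u).1 h
    · simpa [hF', h] using hu
  have hcard : (univ.filter (fun u => 0 < F' u)).card < k := by
    rw [← hk]
    apply Finset.card_lt_card
    refine Finset.ssubset_iff_subset_ne.2 ⟨?_, ?_⟩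
    · intro u hu
      rw [memS]
      exact hpos u (by simpa using hu)
    · intro h
      have : w ∈ univ.filter (fun u => 0 < F' u) := by rw [h]; exact hw
      simp [hF', hw, hm] at this
  have h1 := ih _ hcard F' hF'0 rfl (fun T hT hT' => hS T hT (fun u hu => hpos u (hT' u hu)))
  have h2 : α * ∑ u, d u * F' u ≤ ∑ u, ∑ v, A u v * max (F' u - F' v) 0 := by
    rcases h1 with h1 | h1
    · simp [h1]
    · exact h1.le
  have h3 := mul_lt_mul_of_pos_left (hS S hne (fun u hu => (memS u).1 hu)) hmpos
  have e1 : ∑ u, d u * F u = m * ∑ u ∈ S, d u + ∑ u, d u * F' u := by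
    rw [← Finset.sum_filter_add_sum_filter_not univ (fun u => u ∈ S) (fun u => d u * F u)]
    have : ∑ u, d u * F' u = ∑ u, d u * F u - m * ∑ u ∈ S, d u := by
      simp only [hF', mul_sub, Finset.sum_sub_distrib]
      congr 1
      rw [Finset.mul_sum, ← Finset.sum_filter_add_sum_filter_not univ (fun u => u ∈ S)]
      have hz : ∑ x ∈ univ.filter (fun u => u ∉ S), d x * (m * if x ∈ S then 1 else 0) = 0 := by
        apply Finset.sum_eq_zero
        intro x hx
        simp at hx
        simp [hx]
      rw [hz, add_zero]
      have : univ.filter (fun u => u ∈ S) = S := by ext; simp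
      rw [this]
      apply Finset.sum_congr rfl
      intro x hx
      simp [hx]; ring
    rw [this, Finset.sum_filter_add_sum_filter_not]
    ring
  have e2 : ∑ u, ∑ v, A u v * max (F u - F v) 0
      = m * cut A S + ∑ u, ∑ v, A u v * max (F' u - F' v) 0 := by
    unfold cut
    simp only [Finset.mul_sum, ← Finset.sum_add_distrib]
    refine Finset.sum_congr rfl fun u _ => Finset.sum_congr rfl fun v _ => ?_
    have key : max (F u - F v) 0 = m * (if u ∈ S ∧ v ∉ S then 1 else 0)
        + max (F' u - F' v) 0 := by
      have zero : ∀ x, x ∉ S → F x = 0 := fun x hx =>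
        le_antisymm (not_lt.mp fun h => hx ((memS x).2 h)) (hF x)
      by_cases hu : u ∈ S <;> by_cases hv : v ∈ S
      · simp [hF', hu, hv]
      · have := hmin u hu
        simp [hF', hu, hv, zero v hv, hF u, this]
      · have := hmin v hv
        simp [hF', hu, hv, zero u hu, hF v, this]
      · simp [hF', hu, hv]
    rw [key]; ring
  rw [e1, e2]
  nlinarith

theorem exists_median [Nonempty ι] (d : ι → ℝ) (hd : ∀ u, 0 ≤ d u) (f : ι → ℝ) :
    ∃ c, ∑ u ∈ univ.filter (fun u => c < f u), d u ≤ (∑ u, d u) / 2 ∧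
      ∑ u ∈ univ.filter (fun u => f u < c), d u ≤ (∑ u, d u) / 2 := by
  have hT : 0 ≤ ∑ u, d u := Finset.sum_nonneg fun u _ => hd u
  set P := univ.filter
    (fun w => ∑ u ∈ univ.filter (fun u => f w < f u), d u ≤ (∑ u, d u) / 2) with hP
  have hPne : P.Nonempty := by
    obtain ⟨w, -, hw⟩ := Finset.exists_max_image univ f Finset.univ_nonempty
    refine ⟨w, ?_⟩
    simp only [hP, mem_filter, mem_univ, true_and]
    rw [Finset.sum_eq_zero]
    · linarith
    · intro x hx
      simp at hx
      exact absurd hx (not_lt.mpr (hw x (mem_univ _)))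
  obtain ⟨w, hw, hmin⟩ := P.exists_min_image f hPne
  refine ⟨f w, by simpa [hP] using hw, ?_⟩
  by_cases hne : (univ.filter (fun u => f u < f w)).Nonempty
  swap
  · rw [Finset.not_nonempty_iff_eq_empty.1 hne]
    rw [Finset.sum_empty]; linarith
  obtain ⟨z, hz, hmax⟩ := Finset.exists_max_image _ f hne
  simp only [mem_filter, mem_univ, true_and] at hz hmax
  have hzP : z ∉ P := fun h => absurd (hmin z h) (not_le.mpr hz)
  simp only [hP, mem_filter, mem_univ, true_and, not_le] at hzP
  have h := Finset.sum_filter_add_sum_filter_not univ (fun u => f z < f u) d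
  have he : univ.filter (fun u => ¬ f z < f u) = univ.filter (fun u => f u < f w) := by
    ext u
    simp only [mem_filter, mem_univ, true_and, not_lt]
    exact ⟨fun h => lt_of_le_of_lt h hz, fun h => hmax u h⟩
  rw [he] at h
  linarith

/-- Sweep argument for a nonnegative function. -/
theorem sweep (A : ι → ι → ℝ) (hA : ∀ u v, 0 ≤ A u v) (hs : ∀ u v, A u v = A v u)
    (d : ι → ℝ) (hd : ∀ u, d u = ∑ v, A u v) (lam : ℝ) (h : ι → ℝ) (h0 : ∀ u, 0 ≤ h u)
    (hpos : 0 < ∑ u, d u * h u ^ 2)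
    (hE : ∑ u, ∑ v, A u v * (h u - h v) ^ 2 ≤ 2 * lam * ∑ u, d u * h u ^ 2) :
    ∃ S : Finset ι, S.Nonempty ∧ (∀ u ∈ S, 0 < h u) ∧
      cut A S ≤ Real.sqrt (2 * lam) * ∑ u ∈ S, d u := by
  by_contra hcon
  push Not at hcon
  have hc := coarea A d (Real.sqrt (2 * lam)) _ (fun u => h u ^ 2) (fun u => by positivity) rfl
    (fun S hS hS' => hcon S hS (fun u hu => by
      have := hS' u hu
      exact lt_of_le_of_ne (h0 u) (fun e => by simp [← e] at this)))
  rcases hc with hc | hc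
  · have : ∀ u, h u ^ 2 = 0 := fun u => congrFun hc u
    simp [this] at hpos
  set N := ∑ u, d u * h u ^ 2 with hN
  set E := ∑ u, ∑ v, A u v * (h u - h v) ^ 2 with hEdef
  set M := ∑ u, ∑ v, A u v * max (h u ^ 2 - h v ^ 2) 0 with hM
  set K := ∑ u, ∑ v, A u v * |h u ^ 2 - h v ^ 2| with hK
  set Q := ∑ u, ∑ v, A u v * (h u + h v) ^ 2 with hQ
  have hE0 : 0 ≤ E := Finset.sum_nonneg fun u _ => Finset.sum_nonneg fun v _ =>
    mul_nonneg (hA u v) (sq_nonneg _)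
  have hlam : 0 ≤ 2 * lam := by
    by_contra hneg
    push Not at hneg
    nlinarith
  have hM' : M = ∑ u, ∑ v, A u v * max (h v ^ 2 - h u ^ 2) 0 := by
    rw [hM, Finset.sum_comm]
    refine Finset.sum_congr rfl fun u _ => Finset.sum_congr rfl fun v _ => ?_
    rw [hs]
  have hKM : K = 2 * M := by
    rw [two_mul]
    nth_rewrite 2 [hM']
    rw [hM, hK]
    simp only [← Finset.sum_add_distrib]
    refine Finset.sum_congr rfl fun u _ => Finset.sum_congr rfl fun v _ => ?_
    rw [← mul_add]
    congr 1
    rcases le_total (h u ^ 2) (h v ^ 2) with hh | hh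
    · rw [abs_of_nonpos (by linarith), max_eq_right (by linarith), max_eq_left (by linarith)]
      ring
    · rw [abs_of_nonneg (by linarith), max_eq_left (by linarith), max_eq_right (by linarith)]
      ring
  have hN1 : ∑ u, ∑ v, A u v * h u ^ 2 = N := by
    rw [hN]
    refine Finset.sum_congr rfl fun u _ => ?_
    rw [hd, Finset.sum_mul]
  have hN2 : ∑ u, ∑ v, A u v * h v ^ 2 = N := by
    rw [← hN1, Finset.sum_comm]
    refine Finset.sum_congr rfl fun u _ => Finset.sum_congr rfl fun v _ => ?_
    rw [hs]
  have hQN : Q ≤ 4 * N := by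
    have : 4 * N = ∑ u, ∑ v, (2 * (A u v * h u ^ 2) + 2 * (A u v * h v ^ 2)) := by
      simp only [Finset.sum_add_distrib, ← Finset.mul_sum, hN1, hN2]; ring
    rw [this, hQ]
    refine Finset.sum_le_sum fun u _ => Finset.sum_le_sum fun v _ => ?_
    nlinarith [mul_nonneg (hA u v) (sq_nonneg (h u - h v))]
  have hCS : K ^ 2 ≤ E * Q := by
    rw [hK, hEdef, hQ]
    simp only [← Fintype.sum_prod_type']
    apply Finset.sum_sq_le_sum_mul_sum_of_sq_le_mul
    · intro i _; exact mul_nonneg (hA _ _) (sq_nonneg _)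
    · intro i _; exact mul_nonneg (hA _ _) (sq_nonneg _)
    · intro i _
      apply le_of_eq
      rw [mul_pow, sq_abs]; ring
  have hs2 : Real.sqrt (2 * lam) ^ 2 = 2 * lam := Real.sq_sqrt hlam
  have hlt : (2 * (Real.sqrt (2 * lam) * N)) ^ 2 < K ^ 2 := by
    rw [hKM]
    apply pow_lt_pow_left₀ _ (by positivity) (by norm_num)
    linarith
  have : E * Q ≤ (2 * lam * N) * (4 * N) := by
    apply mul_le_mul hE hQN _ (by positivity)
    exact Finset.sum_nonneg fun u _ => Finset.sum_nonneg fun v _ =>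
      mul_nonneg (hA u v) (sq_nonneg _)
  have e : (2 * (Real.sqrt (2 * lam) * N)) ^ 2 = (2 * lam * N) * (4 * N) := by
    rw [mul_pow, mul_pow, hs2]; ring
  linarith

theorem core [Nonempty ι] (A : ι → ι → ℝ) (hA : ∀ u v, 0 ≤ A u v) (hs : ∀ u v, A u v = A v u)
    (d : ι → ℝ) (hd : ∀ u, d u = ∑ v, A u v) (lam : ℝ) (f : ι → ℝ)
    (hf0 : ∑ u, d u * f u = 0)
    (hpos : 0 < ∑ u, d u * f u ^ 2)
    (hE : ∑ u, ∑ v, A u v * (f u - f v) ^ 2 ≤ 2 * lam * ∑ u, d u * f u ^ 2) :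
    ∃ S : Finset ι, S.Nonempty ∧ ∑ u ∈ S, d u ≤ (∑ u, d u) / 2 ∧
      cut A S ≤ Real.sqrt (2 * lam) * ∑ u ∈ S, d u := by
  have hd0 : ∀ u, 0 ≤ d u := fun u => by
    rw [hd]; exact Finset.sum_nonneg fun v _ => hA u v
  obtain ⟨c, hc1, hc2⟩ := exists_median d hd0 f
  set p : ι → ℝ := fun u => max (f u - c) 0 with hp
  set q : ι → ℝ := fun u => max (c - f u) 0 with hq
  have hpq : ∀ u, p u ^ 2 + q u ^ 2 = (f u - c) ^ 2 := by
    intro u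
    simp only [hp, hq]
    rcases le_total (f u) c with h | h
    · rw [max_eq_right (by linarith), max_eq_left (by linarith)]; ring
    · rw [max_eq_left (by linarith), max_eq_right (by linarith)]; ring
  have hN : ∑ u, d u * f u ^ 2 ≤ ∑ u, d u * p u ^ 2 + ∑ u, d u * q u ^ 2 := by
    have : ∑ u, d u * p u ^ 2 + ∑ u, d u * q u ^ 2
        = ∑ u, d u * f u ^ 2 - 2 * c * ∑ u, d u * f u + c ^ 2 * ∑ u, d u := by
      rw [Finset.mul_sum, Finset.mul_sum, ← Finset.sum_add_distrib, ← Finset.sum_sub_distrib,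
        ← Finset.sum_add_distrib]
      refine Finset.sum_congr rfl fun u _ => ?_
      rw [← mul_add, hpq]; ring
    rw [this, hf0]
    have : 0 ≤ c ^ 2 * ∑ u, d u := mul_nonneg (sq_nonneg _) (Finset.sum_nonneg fun u _ => hd0 u)
    linarith
  have hEpq : ∑ u, ∑ v, A u v * (p u - p v) ^ 2 + ∑ u, ∑ v, A u v * (q u - q v) ^ 2
      ≤ ∑ u, ∑ v, A u v * (f u - f v) ^ 2 := by
    simp only [← Finset.sum_add_distrib]
    refine Finset.sum_le_sum fun u _ => Finset.sum_le_sum fun v _ => ?_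
    rw [← mul_add]
    refine mul_le_mul_of_nonneg_left ?_ (hA u v)
    have a1 : f u - f v = (p u - p v) - (q u - q v) := by
      have : ∀ x, p x - q x = f x - c := by
        intro x
        simp only [hp, hq]
        rcases le_total (f x) c with h | h
        · rw [max_eq_right (by linarith), max_eq_left (by linarith)]; ring
        · rw [max_eq_left (by linarith), max_eq_right (by linarith)]; ring
      linarith [this u, this v]
    have z : ∀ x, p x * q x = 0 := by
      intro x
      simp only [hp, hq]
      rcases le_total (f x) c with h | h
      · rw [max_eq_right (a := f x - c) (by linarith)]; ring
      · rw [max_eq_right (a := c - f x) (by linarith)]; ring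
    have n1 : ∀ x y, 0 ≤ p x * q y := fun x y => mul_nonneg (le_max_right _ _) (le_max_right _ _)
    rw [a1]
    nlinarith [z u, z v, n1 u v, n1 v u]
  have hNp : 0 ≤ ∑ u, d u * p u ^ 2 :=
    Finset.sum_nonneg fun u _ => mul_nonneg (hd0 u) (sq_nonneg _)
  have hNq : 0 ≤ ∑ u, d u * q u ^ 2 :=
    Finset.sum_nonneg fun u _ => mul_nonneg (hd0 u) (sq_nonneg _)
  have nonE : ∀ g : ι → ℝ, 0 ≤ ∑ u, ∑ v, A u v * (g u - g v) ^ 2 := fun g =>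
    Finset.sum_nonneg fun u _ => Finset.sum_nonneg fun v _ => mul_nonneg (hA u v) (sq_nonneg _)
  have hlam : 0 ≤ lam := by
    by_contra hneg
    push Not at hneg
    nlinarith [nonE f]
  have hle : 2 * lam * ∑ u, d u * f u ^ 2
      ≤ 2 * lam * (∑ u, d u * p u ^ 2 + ∑ u, d u * q u ^ 2) :=
    mul_le_mul_of_nonneg_left hN (by linarith)
  have fin : ∀ g : ι → ℝ, ∀ T : Finset ι, ∑ u ∈ T, d u ≤ (∑ u, d u) / 2 → (∀ u, 0 ≤ g u) →
      (∀ u, 0 < g u → u ∈ T) → 0 < ∑ u, d u * g u ^ 2 →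
      ∑ u, ∑ v, A u v * (g u - g v) ^ 2 ≤ 2 * lam * ∑ u, d u * g u ^ 2 →
      ∃ S : Finset ι, S.Nonempty ∧ ∑ u ∈ S, d u ≤ (∑ u, d u) / 2 ∧
      cut A S ≤ Real.sqrt (2 * lam) * ∑ u ∈ S, d u := by
    intro g T hT hg hgT hgpos hgE
    obtain ⟨S, hS, hS1, hS2⟩ := sweep A hA hs d hd lam g hg hgpos hgE
    refine ⟨S, hS, le_trans ?_ hT, hS2⟩
    exact Finset.sum_le_sum_of_subset_of_nonneg (fun u hu => hgT u (hS1 u hu))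
      (fun u _ _ => hd0 u)
  have finp := fin p _ hc1 (fun u => le_max_right _ _) (fun u hu => by
    simpa [hp] using hu)
  have finq := fin q _ hc2 (fun u => le_max_right _ _) (fun u hu => by
    simpa [hq] using hu)
  have Ep := nonE p
  have Eq := nonE q
  by_cases h1 : 0 < ∑ u, d u * p u ^ 2 ∧
      ∑ u, ∑ v, A u v * (p u - p v) ^ 2 ≤ 2 * lam * ∑ u, d u * p u ^ 2
  · exact finp h1.1 h1.2
  by_cases h2 : 0 < ∑ u, d u * q u ^ 2 ∧
      ∑ u, ∑ v, A u v * (q u - q v) ^ 2 ≤ 2 * lam * ∑ u, d u * q u ^ 2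
  · exact finq h2.1 h2.2
  exfalso
  rcases hNp.eq_or_lt with zp | zp <;> rcases hNq.eq_or_lt with zq | zq
  · linarith
  · apply h2
    refine ⟨zq, ?_⟩
    rw [← zp] at hle
    rw [zero_add] at hle
    linarith
  · apply h1
    refine ⟨zp, ?_⟩
    rw [← zq] at hle
    rw [add_zero] at hle
    linarith
  · have b1 := not_le.1 fun h => h1 ⟨zp, h⟩
    have b2 := not_le.1 fun h => h2 ⟨zq, h⟩
    rw [mul_add] at hle
    linarith

end CheegerAux

/-- **Cheeger inequality (hard direction).**  For a finite simple connected graph on at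
least two vertices with second smallest normalized-Laplacian eigenvalue `λ₂` (here `μ` is
a monotone enumeration of the eigenvalues, so `λ₂ = μ 1`), there is a nonempty vertex set
`S` with `vol S ≤ vol V / 2` and `e(S, Sᶜ) / vol S ≤ √(2 λ₂)`; that is,
`h(G) ≤ √(2 λ₂)`. -/
theorem cheeger_upper_bound {n : ℕ} (hn : 1 < n) (G : SimpleGraph (Fin n))
    [DecidableRel G.Adj] (hG : G.Connected)
    (hL : (normLapMatrix G).IsHermitian)
    (μ : Fin n → ℝ) (hmono : Monotone μ)
    (hperm : ∃ σ : Equiv.Perm (Fin n), hL.eigenvalues ∘ σ = μ) :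
    ∃ S : Finset (Fin n), S.Nonempty ∧
      (∑ v ∈ S, (G.degree v : ℝ)) ≤ (∑ v : Fin n, (G.degree v : ℝ)) / 2 ∧
      ((Finset.univ.filter
          (fun p : Fin n × Fin n => G.Adj p.1 p.2 ∧ p.1 ∈ S ∧ p.2 ∉ S)).card : ℝ) /
        (∑ v ∈ S, (G.degree v : ℝ)) ≤ Real.sqrt (2 * μ ⟨1, hn⟩) := by
  obtain ⟨σ, hσ⟩ := hperm
  have : Nontrivial (Fin n) := Fin.nontrivial_iff_two_le.2 hn
  have hdpos : ∀ v, 0 < (G.degree v : ℝ) := fun v => by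
    exact_mod_cast hG.preconnected.degree_pos_of_nontrivial v
  set A : Fin n → Fin n → ℝ := fun u v => if G.Adj u v then 1 else 0 with hA
  have hA0 : ∀ u v, 0 ≤ A u v := fun u v => by simp only [hA]; split_ifs <;> norm_num
  have hAs : ∀ u v, A u v = A v u := fun u v => by simp only [hA, G.adj_comm]
  have hd : ∀ u, (G.degree u : ℝ) = ∑ v, A u v := fun u => by
    simp only [hA]
    rw [Finset.sum_boole, ← G.card_neighborFinset_eq_degree, G.neighborFinset_eq_filter]
  -- eigenvectors
  set i0 := σ ⟨0, by omega⟩ with hi0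
  set i1 := σ ⟨1, hn⟩ with hi1
  have hi : i0 ≠ i1 := fun h => by simpa using σ.injective h
  have hm1 : hL.eigenvalues i1 = μ ⟨1, hn⟩ := congrFun hσ _
  have hm0 : hL.eigenvalues i0 ≤ μ ⟨1, hn⟩ := by
    have : hL.eigenvalues i0 = μ ⟨0, by omega⟩ := congrFun hσ _
    rw [this]
    exact hmono (by simp)
  set x : Fin n → ℝ := ⇑(hL.eigenvectorBasis i0) with hx
  set y : Fin n → ℝ := ⇑(hL.eigenvectorBasis i1) with hy
  have hLx : (normLapMatrix G).mulVec x = hL.eigenvalues i0 • x := hL.mulVec_eigenvectorBasis i0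
  have hLy : (normLapMatrix G).mulVec y = hL.eigenvalues i1 • y := hL.mulVec_eigenvectorBasis i1
  have ort := orthonormal_iff_ite.1 hL.eigenvectorBasis.orthonormal
  have hxx : ∑ v, x v * x v = 1 := by
    have := ort i0 i0
    rw [if_pos rfl] at this
    rw [PiLp.inner_apply] at this
    rw [← this]
    exact Finset.sum_congr rfl fun v _ => by simp [hx, pow_two]
  have hyy : ∑ v, y v * y v = 1 := by
    have := ort i1 i1
    rw [if_pos rfl] at this
    rw [PiLp.inner_apply] at this
    rw [← this]
    exact Finset.sum_congr rfl fun v _ => by simp [hy, pow_two]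
  have hxy : ∑ v, x v * y v = 0 := by
    have := ort i1 i0
    rw [if_neg hi.symm] at this
    rw [PiLp.inner_apply] at this
    rw [← this]
    exact Finset.sum_congr rfl fun v _ => by simp [hx, hy, mul_comm]
  obtain ⟨a, b, hab, hab0⟩ : ∃ a b : ℝ, 0 < a ^ 2 + b ^ 2 ∧
      a * ∑ v, √(G.degree v : ℝ) * x v + b * ∑ v, √(G.degree v : ℝ) * y v = 0 := by
    by_cases h : ∑ v, √(G.degree v : ℝ) * x v = 0
    · exact ⟨1, 0, by norm_num, by rw [h]; ring⟩
    · exact ⟨-∑ v, √(G.degree v : ℝ) * y v, ∑ v, √(G.degree v : ℝ) * x v, by positivity, by ring⟩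
  set z : Fin n → ℝ := fun v => a * x v + b * y v with hz
  have hzz : ∑ v, z v * z v = a ^ 2 + b ^ 2 := by
    have : ∑ v, z v * z v = a ^ 2 * ∑ v, x v * x v + b ^ 2 * ∑ v, y v * y v
        + 2 * a * b * ∑ v, x v * y v := by
      simp only [Finset.mul_sum, ← Finset.sum_add_distrib]
      exact Finset.sum_congr rfl fun v _ => by simp only [hz]; ring
    rw [this, hxx, hyy, hxy]; ring
  have hLz : ∀ v, (normLapMatrix G).mulVec z v
      = a * (hL.eigenvalues i0 * x v) + b * (hL.eigenvalues i1 * y v) := by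
    intro v
    have : z = a • x + b • y := by ext; simp [hz]
    rw [this, Matrix.mulVec_add, Matrix.mulVec_smul, Matrix.mulVec_smul, hLx, hLy]
    simp
  have hzLz : ∑ v, z v * (normLapMatrix G).mulVec z v ≤ μ ⟨1, hn⟩ * ∑ v, z v * z v := by
    have : ∑ v, z v * (normLapMatrix G).mulVec z v
        = a ^ 2 * hL.eigenvalues i0 * ∑ v, x v * x v
          + b ^ 2 * hL.eigenvalues i1 * ∑ v, y v * y v
          + (a * b * hL.eigenvalues i0 + a * b * hL.eigenvalues i1) * ∑ v, x v * y v := by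
      simp only [Finset.mul_sum, ← Finset.sum_add_distrib]
      exact Finset.sum_congr rfl fun v _ => by rw [hLz]; simp only [hz]; ring
    rw [this, hxx, hyy, hxy, hzz, hm1]
    nlinarith [mul_le_mul_of_nonneg_left hm0 (sq_nonneg a)]
  set s : Fin n → ℝ := fun v => √(G.degree v : ℝ) with hs
  have hspos : ∀ v, 0 < s v := fun v => Real.sqrt_pos.2 (hdpos v)
  have hss : ∀ v, s v * s v = G.degree v := fun v => Real.mul_self_sqrt (hdpos v).le
  set f : Fin n → ℝ := fun v => (s v)⁻¹ * z v with hf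
  have hzf : ∀ v, z v = s v * f v := fun v => by
    simp only [hf]; rw [mul_inv_cancel_left₀ (hspos v).ne']
  have hN : ∑ u, (G.degree u : ℝ) * f u ^ 2 = ∑ v, z v * z v :=
    Finset.sum_congr rfl fun v _ => by rw [hzf, ← hss]; ring
  have hLexp : ∑ v, z v * (normLapMatrix G).mulVec z v
      = ∑ v, z v * z v - ∑ u, ∑ v, A u v * (f u * f v) := by
    rw [← Finset.sum_sub_distrib]
    refine Finset.sum_congr rfl fun u _ => ?_
    have : (normLapMatrix G).mulVec z u = z u - (s u)⁻¹ * ∑ v, A u v * f v := by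
      unfold normLapMatrix
      rw [Matrix.sub_mulVec, Matrix.one_mulVec, Pi.sub_apply, ← Matrix.mulVec_mulVec,
        ← Matrix.mulVec_mulVec, Matrix.mulVec_diagonal]
      congr 2
      simp only [Matrix.mulVec, dotProduct, SimpleGraph.adjMatrix_apply, hA]
      refine Finset.sum_congr rfl fun v _ => ?_
      congr 1
      simp [Matrix.diagonal_apply, hf, hs]
    rw [this, mul_sub, Finset.mul_sum, Finset.mul_sum]
    congr 1
    refine Finset.sum_congr rfl fun v _ => ?_
    simp only [hf]; ring
  have hE : ∑ u, ∑ v, A u v * (f u - f v) ^ 2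
      = 2 * (∑ u, (G.degree u : ℝ) * f u ^ 2 - ∑ u, ∑ v, A u v * (f u * f v)) := by
    have hN1 : ∑ u, ∑ v, A u v * f u ^ 2 = ∑ u, (G.degree u : ℝ) * f u ^ 2 := by
      refine Finset.sum_congr rfl fun u _ => ?_
      rw [hd, Finset.sum_mul]
    have hN2 : ∑ u, ∑ v, A u v * f v ^ 2 = ∑ u, (G.degree u : ℝ) * f u ^ 2 := by
      rw [← hN1, Finset.sum_comm]
      refine Finset.sum_congr rfl fun u _ => Finset.sum_congr rfl fun v _ => ?_
      rw [hAs]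
    have : ∑ u, ∑ v, A u v * (f u - f v) ^ 2 = ∑ u, ∑ v, A u v * f u ^ 2
        + ∑ u, ∑ v, A u v * f v ^ 2 - 2 * ∑ u, ∑ v, A u v * (f u * f v) := by
      simp only [Finset.mul_sum, ← Finset.sum_add_distrib, ← Finset.sum_sub_distrib]
      refine Finset.sum_congr rfl fun u _ => Finset.sum_congr rfl fun v _ => ?_
      ring
    rw [this, hN1, hN2]; ring
  obtain ⟨S, hS, hS1, hS2⟩ := CheegerAux.core A hA0 hAs (fun u => (G.degree u : ℝ)) hd
    (μ ⟨1, hn⟩) f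
    (by
      rw [← hab0, Finset.mul_sum, Finset.mul_sum, ← Finset.sum_add_distrib]
      refine Finset.sum_congr rfl fun v _ => ?_
      have h1 : (G.degree v : ℝ) * f v = s v * z v := by rw [hzf, ← hss]; ring
      rw [h1]; simp only [hz, hs]; ring)
    (by rw [hN, hzz]; exact hab)
    (by rw [hE, hN, ← hLexp]; linarith)
  refine ⟨S, hS, hS1, ?_⟩
  apply div_le_of_le_mul₀ (Finset.sum_nonneg fun u _ => (hdpos u).le) (Real.sqrt_nonneg _)
  refine le_trans (le_of_eq ?_) hS2
  unfold CheegerAux.cut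
  rw [← Fintype.sum_prod_type', ← Finset.sum_boole]
  refine Finset.sum_congr rfl fun p _ => ?_
  simp only [hA]
  by_cases h1 : G.Adj p.1 p.2 <;> simp [h1]
end

section
/- Let $G$ be a finite simple connected graph on $n \ge 2$ vertices with diameter $D$ (the maximum over all vertex pairs of the graph distance), and let $\lambda_2$ be the second smallest eigenvalue of the combinatorial Laplacian $L = \mathrm{Deg} - A$. Then $\lambda_2 \ge \frac{4}{nD}$. -/
open Finset in
/-- Edges on a geodesic from `u` to `v` separate `u` from `v` by distance. -/
theorem aux_pair {n : ℕ} (G : SimpleGraph (Fin n)) [DecidableRel G.Adj]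
    (hG : G.Connected) (D : ℕ) (hDub : ∀ u v : Fin n, G.dist u v ≤ D)
    (f : Fin n → ℝ) (u v : Fin n) :
    (f u - f v) ^ 2 ≤ D * ∑ e : Fin n × Fin n,
      if G.Adj e.1 e.2 ∧ G.dist u e.1 < G.dist u e.2 ∧ G.dist v e.2 < G.dist v e.1
        then (f e.1 - f e.2) ^ 2 else 0 := by
  obtain ⟨p, hp⟩ := hG.exists_walk_length_eq_dist u v
  set k := G.dist u v with hk
  have h1 : ∀ i ≤ k, G.dist u (p.getVert i) = i ∧ G.dist v (p.getVert i) = k - i := by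
    intro i hi
    have a : G.dist u (p.getVert i) ≤ i :=
      (SimpleGraph.dist_le (p.take i)).trans (by simp)
    have b : G.dist (p.getVert i) v ≤ k - i :=
      (SimpleGraph.dist_le (p.drop i)).trans (by simp [hp])
    have c := hG.dist_triangle (u := u) (v := p.getVert i) (w := v)
    rw [G.dist_comm (u := v)]
    omega
  have hadj : ∀ i < k, G.Adj (p.getVert i) (p.getVert (i + 1)) := fun i hi =>
    p.adj_getVert_succ (by omega)
  have htel : f u - f v = ∑ i ∈ range k, (f (p.getVert i) - f (p.getVert (i + 1))) := by
    rw [Finset.sum_range_sub' (fun i => f (p.getVert i))]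
    rw [← hp]; simp
  have hcs : (f u - f v) ^ 2 ≤
      k * ∑ i ∈ range k, (f (p.getVert i) - f (p.getVert (i + 1))) ^ 2 := by
    rw [htel]
    simpa using sq_sum_le_card_mul_sum_sq (s := range k)
      (f := fun i => f (p.getVert i) - f (p.getVert (i + 1)))
  refine hcs.trans ?_
  have hkD : (k : ℝ) ≤ D := by exact_mod_cast hDub u v
  refine mul_le_mul hkD ?_ (sum_nonneg fun _ _ => sq_nonneg _) (by positivity)
  rw [← Finset.sum_filter]
  rw [← Finset.sum_image (s := range k) (g := fun i => (p.getVert i, p.getVert (i + 1)))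
    (f := fun e : Fin n × Fin n => (f e.1 - f e.2) ^ 2)]
  · refine sum_le_sum_of_subset_of_nonneg ?_ fun _ _ _ => sq_nonneg _
    intro e he
    simp only [mem_image, mem_range] at he
    obtain ⟨i, hi, rfl⟩ := he
    have a := h1 i hi.le
    have b := h1 (i + 1) hi
    simp only [mem_filter, mem_univ, true_and]
    exact ⟨hadj i hi, by omega, by omega⟩
  · intro i hi j hj hij
    simp only [coe_range, Set.mem_Iio] at hi hj
    have e : p.getVert i = p.getVert j := (Prod.ext_iff.1 hij).1
    have a := h1 i hi.le
    have b := h1 j hj.le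
    rw [e] at a
    omega

open Finset in
theorem aux_count {n : ℕ} (G : SimpleGraph (Fin n)) (a b : Fin n) (c : ℝ) (hc : 0 ≤ c) :
    ∑ u, ∑ v, (if G.dist u a < G.dist u b ∧ G.dist v b < G.dist v a then c else 0)
      ≤ (n : ℝ) ^ 2 / 4 * c := by
  set A := univ.filter (fun u => G.dist u a < G.dist u b) with hA
  set B := univ.filter (fun u => G.dist u b < G.dist u a) with hB
  have hd : Disjoint A B := by
    rw [Finset.disjoint_left]
    intro x hx hy
    simp only [hA, hB, mem_filter] at hx hy
    omega
  have hcard : A.card + B.card ≤ n := by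
    rw [← card_union_of_disjoint hd]
    simpa using card_le_univ (A ∪ B)
  have e : ∑ u, ∑ v, (if G.dist u a < G.dist u b ∧ G.dist v b < G.dist v a then c else 0)
      = A.card * B.card * c := by
    simp only [ite_and]
    have : ∀ u, (∑ v, if G.dist u a < G.dist u b then
        (if G.dist v b < G.dist v a then c else 0) else 0)
        = if G.dist u a < G.dist u b then B.card * c else 0 := by
      intro u
      split_ifs
      · rw [← sum_filter, sum_const, nsmul_eq_mul]
      · simp
    simp only [this]
    rw [← sum_filter, sum_const, nsmul_eq_mul, mul_assoc]
  rw [e]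
  have h : (A.card : ℝ) + B.card ≤ n := by exact_mod_cast hcard
  refine mul_le_mul_of_nonneg_right ?_ hc
  have h0 : (0 : ℝ) ≤ A.card := by positivity
  have h1 : (0 : ℝ) ≤ B.card := by positivity
  nlinarith [sq_nonneg ((A.card : ℝ) - B.card)]

open Finset in
theorem aux_main {n : ℕ} (G : SimpleGraph (Fin n)) [DecidableRel G.Adj]
    (hG : G.Connected) (D : ℕ) (hDub : ∀ u v : Fin n, G.dist u v ≤ D)
    (f : Fin n → ℝ) (hf : ∑ i, f i = 0) :
    n * (f ⬝ᵥ f) ≤ D * ((n : ℝ) ^ 2 / 4) * (f ⬝ᵥ (G.lapMatrix ℝ).mulVec f) := by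
  have hq : f ⬝ᵥ (G.lapMatrix ℝ).mulVec f
      = (∑ i, ∑ j, if G.Adj i j then (f i - f j) ^ 2 else 0) / 2 := by
    rw [← SimpleGraph.lapMatrix_toLinearMap₂', Matrix.toLinearMap₂'_apply']
  have hl : ∑ u, ∑ v, (f u - f v) ^ 2 = 2 * (n * (f ⬝ᵥ f)) := by
    have : ∀ u, ∑ v, (f u - f v) ^ 2 = n * (f u * f u) + f ⬝ᵥ f := by
      intro u
      have : ∀ v, (f u - f v) ^ 2 = f u * f u - 2 * f u * f v + f v * f v := fun v => by ring
      simp only [this, sum_add_distrib, sum_sub_distrib, ← mul_sum, hf, dotProduct]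
      simp
      ring
    simp only [this, sum_add_distrib, ← mul_sum]
    simp [dotProduct]
    ring
  have hmain : ∑ u, ∑ v, (f u - f v) ^ 2 ≤
      D * ((n : ℝ) ^ 2 / 4 * ∑ i, ∑ j, if G.Adj i j then (f i - f j) ^ 2 else 0) := by
    calc _ ≤ ∑ u, ∑ v, (D : ℝ) * ∑ e : Fin n × Fin n,
      (if G.Adj e.1 e.2 ∧ G.dist u e.1 < G.dist u e.2 ∧ G.dist v e.2 < G.dist v e.1
        then (f e.1 - f e.2) ^ 2 else 0) :=
          sum_le_sum fun u _ => sum_le_sum fun v _ => aux_pair G hG D hDub f u v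
      _ = D * ∑ e : Fin n × Fin n, ∑ u, ∑ v, 
        (if G.Adj e.1 e.2 ∧ G.dist u e.1 < G.dist u e.2 ∧ G.dist v e.2 < G.dist v e.1
        then (f e.1 - f e.2) ^ 2 else 0) := by
          simp only [← mul_sum]
          congr 1
          rw [sum_comm]
          conv_rhs => rw [sum_comm]
          rw [sum_comm]
          refine sum_congr rfl fun u _ => ?_
          rw [sum_comm]
      _ ≤ _ := by
          refine mul_le_mul_of_nonneg_left ?_ (by positivity)
          rw [← Fintype.sum_prod_type'
            (f := fun i j => if G.Adj i j then (f i - f j) ^ 2 else 0), mul_sum]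
          refine sum_le_sum fun e _ => ?_
          by_cases h : G.Adj e.1 e.2
          · simp only [h, true_and, if_true]
            exact aux_count G e.1 e.2 _ (sq_nonneg _)
          · simp [h]
  rw [hq]
  linarith

/-- **Lower bound on algebraic connectivity via the diameter.**  For a finite simple
connected graph on `n ≥ 2` vertices with diameter `D` and second smallest eigenvalue
`λ₂` of the combinatorial Laplacian `L = Deg - A` (here `μ` is a monotone enumeration of
the eigenvalues of `L`, so `λ₂ = μ 1`), we have `λ₂ ≥ 4 / (n D)`. -/
theorem algebraic_connectivity_ge_four_div_n_mul_diam
    {n : ℕ} (hn : 1 < n) (G : SimpleGraph (Fin n)) [DecidableRel G.Adj]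
    (hG : G.Connected)
    (hL : (G.lapMatrix ℝ).IsHermitian)
    (μ : Fin n → ℝ) (hmono : Monotone μ)
    (hperm : ∃ σ : Equiv.Perm (Fin n), hL.eigenvalues ∘ σ = μ)
    (D : ℕ) (hDub : ∀ u v : Fin n, G.dist u v ≤ D)
    (hDattained : ∃ u v : Fin n, G.dist u v = D) :
    4 / ((n : ℝ) * (D : ℝ)) ≤ μ ⟨1, hn⟩ := by
  obtain ⟨σ, hσ⟩ := hperm
  set i0 : Fin n := ⟨0, by omega⟩ with hi0
  set i1 : Fin n := ⟨1, hn⟩ with hi1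
  have hle : μ i0 ≤ μ i1 := hmono (by simp [hi0, hi1])
  have hne : σ i0 ≠ σ i1 := fun h => by simpa [hi0, hi1] using σ.injective h
  have hev : ∀ i, (G.lapMatrix ℝ).mulVec (hL.eigenvectorBasis (σ i)).ofLp
      = μ i • (hL.eigenvectorBasis (σ i)).ofLp := by
    intro i
    rw [← hσ]
    exact hL.mulVec_eigenvectorBasis (σ i)
  have hon : ∀ i j, (hL.eigenvectorBasis i).ofLp ⬝ᵥ (hL.eigenvectorBasis j).ofLp
      = if i = j then 1 else 0 := by
    intro i j
    rw [← orthonormal_iff_ite.1 hL.eigenvectorBasis.orthonormal i j,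
      EuclideanSpace.inner_eq_star_dotProduct, dotProduct_comm]
    simp
  set x := (hL.eigenvectorBasis (σ i0)).ofLp with hx
  set y := (hL.eigenvectorBasis (σ i1)).ofLp with hy
  have hxx : x ⬝ᵥ x = 1 := by rw [hx, hon]; simp
  have hyy : y ⬝ᵥ y = 1 := by rw [hy, hon]; simp
  have hxy : x ⬝ᵥ y = 0 := by rw [hx, hy, hon]; simp [hne]
  have hyx : y ⬝ᵥ x = 0 := by rw [dotProduct_comm, hxy]
  have hLx := hev i0
  have hLy := hev i1
  rw [← hx] at hLx
  rw [← hy] at hLy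
  have key : ∀ a b : ℝ, a * ∑ i, x i + b * ∑ i, y i = 0 →
      n * (a ^ 2 + b ^ 2) ≤ D * ((n : ℝ) ^ 2 / 4) * (a ^ 2 * μ i0 + b ^ 2 * μ i1) := by
    intro a b hab
    have h := aux_main G hG D hDub (a • x + b • y) (by
      simpa [Finset.sum_add_distrib, ← Finset.mul_sum] using hab)
    simp only [Matrix.mulVec_add, Matrix.mulVec_smul, hLx, hLy, dotProduct_add, add_dotProduct,
      smul_dotProduct, dotProduct_smul, hxx, hyy, hxy, hyx, smul_eq_mul] at h
    ring_nf at h ⊢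
    linarith
  have hnpos : (0 : ℝ) < n := by exact_mod_cast (by omega : 0 < n)
  have hex : ∃ a b : ℝ, a * ∑ i, x i + b * ∑ i, y i = 0 ∧ 0 < a ^ 2 + b ^ 2 := by
    by_cases h : ∑ i, y i = 0
    · exact ⟨0, 1, by simp [h], by norm_num⟩
    · exact ⟨∑ i, y i, -∑ i, x i, by ring, by positivity⟩
  obtain ⟨a, b, hab, hpos⟩ := hex
  have h1 := key a b hab
  have h2 : a ^ 2 * μ i0 + b ^ 2 * μ i1 ≤ (a ^ 2 + b ^ 2) * μ i1 := by
    nlinarith [mul_le_mul_of_nonneg_left hle (sq_nonneg a)]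
  have h3 : (n : ℝ) * (a ^ 2 + b ^ 2) ≤ D * ((n : ℝ) ^ 2 / 4) * ((a ^ 2 + b ^ 2) * μ i1) :=
    h1.trans (mul_le_mul_of_nonneg_left h2 (by positivity))
  have h4 : (1 : ℝ) ≤ D * (n / 4) * μ i1 := by
    have : (n * (a ^ 2 + b ^ 2)) * 1 ≤ (n * (a ^ 2 + b ^ 2)) * (D * (n / 4) * μ i1) := by
      linarith
    exact le_of_mul_le_mul_left this (by positivity)
  have hD : (0 : ℝ) < D := by
    rcases Nat.eq_zero_or_pos D with h | h
    · rw [h] at h4; norm_num at h4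
    · exact_mod_cast h
  rw [div_le_iff₀ (by positivity)]
  linarith
end

section
/- Let $G$ be a finite simple connected graph and let $(i,j)$ be an edge of $G$. Let $t = |N(i) \cap N(j)|$ be the number of common neighbors of $i$ and $j$ (i.e., the number of triangles containing the edge $(i,j)$). Then the effective resistance between $i$ and $j$ satisfies $\omega(i,j) \le \frac{2}{t + 2}$. -/
open Matrix

/-- `B` is the Moore–Penrose pseudoinverse of `A` (the four Penrose conditions; for any
real matrix such a `B` exists and is unique). -/
def IsMoorePenroseInverse {m : Type*} [Fintype m] (A B : Matrix m m ℝ) : Prop :=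
  A * B * A = A ∧ B * A * B = B ∧ (A * B)ᵀ = A * B ∧ (B * A)ᵀ = B * A

/-- The effective resistance `ω(i,j) = (eᵢ - eⱼ)ᵀ L† (eᵢ - eⱼ)`, expressed via any matrix
`M` (in applications, the Moore–Penrose pseudoinverse `L†` of the Laplacian). -/
noncomputable def effectiveResistance {n : ℕ} (M : Matrix (Fin n) (Fin n) ℝ)
    (i j : Fin n) : ℝ :=
  (Pi.single i (1 : ℝ) - Pi.single j 1) ⬝ᵥ M.mulVec (Pi.single i (1 : ℝ) - Pi.single j 1)

lemma energy_bound {n : ℕ} (G : SimpleGraph (Fin n)) [DecidableRel G.Adj]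
    (i j : Fin n) (hij : G.Adj i j) (f : Fin n → ℝ) :
    (f i - f j) ^ 2 * (((G.neighborFinset i ∩ G.neighborFinset j).card : ℝ) + 2) ≤
      2 * (f ⬝ᵥ (G.lapMatrix ℝ).mulVec f) := by
  rw [← toLinearMap₂'_apply', SimpleGraph.lapMatrix_toLinearMap₂']
  set T := G.neighborFinset i ∩ G.neighborFinset j with hT
  have hmem : ∀ k ∈ T, G.Adj i k ∧ G.Adj j k := by
    intro k hk
    simpa [hT] using hk
  have hne : i ≠ j := hij.ne
  have hiT : i ∉ T := fun h => G.loopless.irrefl i (hmem i h).1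
  have hjT : j ∉ T := fun h => G.loopless.irrefl j (hmem j h).2
  let S : Fin n → ℝ := fun k => ∑ u : Fin n, if G.Adj k u then (f k - f u) ^ 2 else 0
  have hS : ∀ k, ∀ A : Finset (Fin n), (∀ u ∈ A, G.Adj k u) →
      ∑ u ∈ A, (f k - f u) ^ 2 ≤ S k := by
    intro k A hA
    calc ∑ u ∈ A, (f k - f u) ^ 2
        = ∑ u ∈ A, (if G.Adj k u then (f k - f u) ^ 2 else 0) :=
          Finset.sum_congr rfl fun u hu => by rw [if_pos (hA u hu)]
      _ ≤ S k := Finset.sum_le_sum_of_subset_of_nonneg (Finset.subset_univ _)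
          fun u _ _ => by split_ifs <;> positivity
  have hSi := hS i (insert j T) (by
    intro u hu
    rcases Finset.mem_insert.1 hu with rfl | hu
    · exact hij
    · exact (hmem u hu).1)
  have hSj := hS j (insert i T) (by
    intro u hu
    rcases Finset.mem_insert.1 hu with rfl | hu
    · exact hij.symm
    · exact (hmem u hu).2)
  rw [Finset.sum_insert hjT] at hSi
  rw [Finset.sum_insert hiT] at hSj
  have hSk : ∑ k ∈ T, ((f k - f i) ^ 2 + (f k - f j) ^ 2) ≤ ∑ k ∈ T, S k := by
    refine Finset.sum_le_sum fun k hk => ?_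
    have := hS k {i, j} (by
      intro u hu
      simp only [Finset.mem_insert, Finset.mem_singleton] at hu
      rcases hu with rfl | rfl
      · exact (hmem k hk).1.symm
      · exact (hmem k hk).2.symm)
    rwa [Finset.sum_pair hne] at this
  have hall : ∑ k ∈ insert i (insert j T), S k ≤ ∑ k, S k :=
    Finset.sum_le_sum_of_subset_of_nonneg (Finset.subset_univ _)
      fun k _ _ => by simpa using hS k ∅ (by simp)
  rw [Finset.sum_insert (by simp [hne, hiT]), Finset.sum_insert hjT] at hall
  have hq : (T.card : ℝ) * (f i - f j) ^ 2 ≤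
      ∑ k ∈ T, (f i - f k) ^ 2 + ∑ k ∈ T, (f j - f k) ^ 2 +
      ∑ k ∈ T, ((f k - f i) ^ 2 + (f k - f j) ^ 2) := by
    rw [← Finset.sum_add_distrib, ← Finset.sum_add_distrib, ← nsmul_eq_mul]
    refine Finset.card_nsmul_le_sum _ _ _ fun k _ => ?_
    nlinarith [sq_nonneg (f i + f j - 2 * f k)]
  change _ ≤ 2 * ((∑ k, S k) / 2)
  have : (f j - f i) ^ 2 = (f i - f j) ^ 2 := by ring
  linarith

lemma lap_mul_pinv {n : ℕ} (G : SimpleGraph (Fin n)) [DecidableRel G.Adj] (hG : G.Connected)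
    (M : Matrix (Fin n) (Fin n) ℝ) (hM : IsMoorePenroseInverse (G.lapMatrix ℝ) M)
    (b : Fin n → ℝ) (hb : ∑ k, b k = 0) :
    (G.lapMatrix ℝ).mulVec (M.mulVec b) = b := by
  obtain ⟨h1, -, h3, -⟩ := hM
  have hsymm : (G.lapMatrix ℝ)ᵀ = G.lapMatrix ℝ := G.isSymm_lapMatrix ℝ
  set L := G.lapMatrix ℝ with hL
  have h4 : L * (L * M) = L := by
    have := congrArg transpose h1
    rwa [transpose_mul, h3, hsymm] at this
  have hx : L.mulVec (b - L.mulVec (M.mulVec b)) = 0 := by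
    rw [mulVec_sub, mulVec_mulVec, mulVec_mulVec, Matrix.mul_assoc, h4, sub_self]
  rw [hL, SimpleGraph.lapMatrix_mulVec_eq_zero_iff_forall_reachable, ← hL] at hx
  have hs : ∑ k, (b - L.mulVec (M.mulVec b)) k = 0 := by
    have h0 : (fun _ => (1 : ℝ)) ⬝ᵥ L.mulVec (M.mulVec b) = 0 := by
      rw [dotProduct_mulVec, ← mulVec_transpose, hsymm, hL,
        SimpleGraph.lapMatrix_mulVec_const_eq_zero, zero_dotProduct]
    simp only [dotProduct, one_mul] at h0
    simp only [Pi.sub_apply, Finset.sum_sub_distrib, hb, h0, sub_zero]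
  ext k
  have hc : ∑ l, (b - L.mulVec (M.mulVec b)) l = n * (b - L.mulVec (M.mulVec b)) k := by
    rw [Finset.sum_congr rfl fun l _ => hx l k (hG.preconnected l k)]
    rw [Finset.sum_const, Finset.card_univ, Fintype.card_fin, nsmul_eq_mul]
  rw [hs] at hc
  have hn : (n : ℝ) ≠ 0 := by
    have := k.pos
    positivity
  have := (mul_eq_zero.1 hc.symm).resolve_left hn
  simp only [Pi.sub_apply] at this
  linarith

/-- **Effective resistance of an edge is bounded via triangles.**  If `(i,j)` is an edge
of a finite simple connected graph `G` contained in `t = |N(i) ∩ N(j)|` triangles, then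
the effective resistance satisfies `ω(i,j) ≤ 2 / (t + 2)`. -/
theorem effectiveResistance_le_of_triangles
    {n : ℕ} (G : SimpleGraph (Fin n)) [DecidableRel G.Adj] (hG : G.Connected)
    (i j : Fin n) (hij : G.Adj i j)
    (M : Matrix (Fin n) (Fin n) ℝ)
    (hM : IsMoorePenroseInverse (G.lapMatrix ℝ) M) :
    effectiveResistance M i j ≤
      2 / (((G.neighborFinset i ∩ G.neighborFinset j).card : ℝ) + 2) := by
  have hLf := lap_mul_pinv G hG M hM (Pi.single i (1 : ℝ) - Pi.single j 1)
    (by simp [Finset.sum_sub_distrib])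
  have he := energy_bound G i j hij (M.mulVec (Pi.single i (1 : ℝ) - Pi.single j 1))
  rw [hLf, dotProduct_comm] at he
  have hw : effectiveResistance M i j =
      M.mulVec (Pi.single i (1 : ℝ) - Pi.single j 1) i -
      M.mulVec (Pi.single i (1 : ℝ) - Pi.single j 1) j := by
    unfold effectiveResistance
    rw [sub_dotProduct, single_one_dotProduct, single_one_dotProduct]
  rw [← hw] at he
  change _ ≤ 2 * effectiveResistance M i j at he
  rw [le_div_iff₀ (by positivity)]
  by_cases h : effectiveResistance M i j ≤ 0
  · have : effectiveResistance M i j *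
        (((G.neighborFinset i ∩ G.neighborFinset j).card : ℝ) + 2) ≤ 0 :=
      mul_nonpos_of_nonpos_of_nonneg h (by positivity)
    linarith
  · push Not at h
    refine le_of_mul_le_mul_left ?_ h
    linarith
end

section
/- Let $G$ be a finite simple connected graph on $n \ge 2$ vertices with combinatorial Laplacian eigenvalues $0 = \lambda_1 < \lambda_2 \le \cdots \le \lambda_n$. Then the sum of the effective resistances over all unordered pairs of distinct vertices satisfies $\sum_{\{i,j\} \subseteq V,\ i \ne j} \omega(i,j) = n \sum_{k=2}^{n} \frac{1}{\lambda_k}$. -/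
open Matrix Finset

theorem trace_of_moorePenrose {n : ℕ} (L M : Matrix (Fin n) (Fin n) ℝ)
    (hL : L.IsHermitian) (h1 : L * M * L = L) (h2 : M * Mᵀ * L = M) :
    M.trace = ∑ k, (hL.eigenvalues k)⁻¹ := by
  obtain ⟨U, hU1, hU2, hLU⟩ : ∃ U : Matrix (Fin n) (Fin n) ℝ, star U * U = 1 ∧ U * star U = 1 ∧
      L = U * diagonal hL.eigenvalues * star U := by
    refine ⟨hL.eigenvectorUnitary, ?_, ?_, ?_⟩
    · simp
    · simp
    · have := hL.spectral_theorem
      rw [Unitary.conjStarAlgAut_apply] at this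
      simpa [Function.comp_def] using this
  set D := diagonal hL.eigenvalues with hD
  set N := star U * M * U with hN
  have htr : M.trace = N.trace := by
    rw [hN, Matrix.trace_mul_comm, ← mul_assoc, hU2, one_mul]
  have hLU' : L * U = U * D := by
    rw [hLU, mul_assoc, hU1, mul_one]
  have hUL : star U * L = D * star U := by
    rw [hLU, ← mul_assoc, ← mul_assoc, hU1, one_mul]
  have hN2 : N = (star U * M * Mᵀ * U) * D := by
    calc N = star U * (M * Mᵀ * L) * U := by rw [h2]
      _ = star U * M * Mᵀ * (L * U) := by simp only [mul_assoc]
      _ = _ := by rw [hLU']; simp only [mul_assoc]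
  have hN1 : D * N * D = D := by
    calc D * N * D = (D * star U) * M * (U * D) := by rw [hN]; simp only [mul_assoc]
      _ = star U * (L * M * L) * U := by rw [← hLU', ← hUL]; simp only [mul_assoc]
      _ = D := by rw [h1, hUL, mul_assoc, hU1, mul_one]
  rw [htr, Matrix.trace]
  refine Finset.sum_congr rfl fun k _ => ?_
  rw [Matrix.diag_apply]
  by_cases hk : hL.eigenvalues k = 0
  · rw [hN2, hD, Matrix.mul_diagonal, hk]; simp
  · have := congrFun (congrFun hN1 k) k
    rw [hD, Matrix.mul_diagonal, Matrix.diagonal_mul, Matrix.diagonal_apply_eq] at this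
    field_simp
    have h3 : hL.eigenvalues k * (N k k * hL.eigenvalues k) = hL.eigenvalues k * 1 := by
      linarith
    have := mul_left_cancel₀ hk h3
    linarith

theorem effectiveResistance_expand {n : ℕ} (M : Matrix (Fin n) (Fin n) ℝ) (i j : Fin n) :
    effectiveResistance M i j = M i i + M j j - M i j - M j i := by
  simp [effectiveResistance, Matrix.mulVec_sub, sub_dotProduct]
  ring

/-- **Total effective resistance via Laplacian eigenvalues.**  For a finite simple
connected graph on `n ≥ 2` vertices with Laplacian eigenvalues
`0 = λ₁ < λ₂ ≤ ⋯ ≤ λₙ` (here `μ` is a monotone enumeration of the eigenvalues), the sum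
of the effective resistances over all unordered pairs of distinct vertices (one half of
the sum over ordered pairs) equals `n ∑_{k=2}^{n} 1/λₖ`. -/
theorem sum_effectiveResistance_eq
    {n : ℕ} (hn : 1 < n) (G : SimpleGraph (Fin n)) [DecidableRel G.Adj]
    (hG : G.Connected)
    (M : Matrix (Fin n) (Fin n) ℝ)
    (hM : IsMoorePenroseInverse (G.lapMatrix ℝ) M)
    (hL : (G.lapMatrix ℝ).IsHermitian)
    (μ : Fin n → ℝ) (hmono : Monotone μ)
    (hperm : ∃ σ : Equiv.Perm (Fin n), hL.eigenvalues ∘ σ = μ) :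
    (∑ p ∈ Finset.univ.offDiag, effectiveResistance M p.1 p.2) / 2 =
      (n : ℝ) * ∑ k ∈ Finset.univ.filter (fun k : Fin n => k ≠ ⟨0, by omega⟩), (μ k)⁻¹ := by
  obtain ⟨h1, h2, h3, h4⟩ := hM
  obtain ⟨σ, hσ⟩ := hperm
  have hsymm : (G.lapMatrix ℝ)ᵀ = G.lapMatrix ℝ := SimpleGraph.isSymm_lapMatrix ℝ G
  have h5 : M * Mᵀ * G.lapMatrix ℝ = M := by
    conv_rhs => rw [← h2, mul_assoc, ← h3, Matrix.transpose_mul, hsymm, ← mul_assoc]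
  have htr := trace_of_moorePenrose _ M hL h1 h5
  have hone : M *ᵥ (fun _ => (1 : ℝ)) = 0 := by
    rw [← h5, ← Matrix.mulVec_mulVec, G.lapMatrix_mulVec_const_eq_zero, Matrix.mulVec_zero]
  have hrow : ∀ i, ∑ j, M i j = 0 := fun i => by
    have := congrFun hone i
    simpa [Matrix.mulVec, dotProduct] using this
  have hsum : ∑ p ∈ Finset.univ.offDiag, effectiveResistance M p.1 p.2
      = ∑ i, ∑ j, effectiveResistance M i j := by
    rw [← Finset.sum_product', Finset.univ_product_univ]
    refine Finset.sum_subset (Finset.subset_univ _) fun p _ hp => ?_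
    have : p.1 = p.2 := by simpa using hp
    rw [this]; simp [effectiveResistance]
  have hcol : ∑ i, ∑ j, M j i = 0 := by
    rw [Finset.sum_comm]; simp [hrow]
  have htotal : ∑ i, ∑ j, effectiveResistance M i j = 2 * n * M.trace := by
    simp only [effectiveResistance_expand, Finset.sum_sub_distrib, Finset.sum_add_distrib, hrow,
      hcol, Matrix.trace, Matrix.diag_apply]
    simp [← Finset.mul_sum]
    ring
  have hpos : ∀ k, 0 ≤ μ k := fun k => by
    rw [← hσ]
    exact (SimpleGraph.posSemidef_lapMatrix ℝ G).eigenvalues_nonneg _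
  have hzero : μ ⟨0, by omega⟩ = 0 := by
    have : Nonempty (Fin n) := ⟨⟨0, by omega⟩⟩
    have hdet := G.det_lapMatrix_eq_zero
    rw [hL.det_eq_prod_eigenvalues, Finset.prod_eq_zero_iff] at hdet
    obtain ⟨k, _, hk⟩ := hdet
    have hk' : μ (σ.symm k) = 0 := by
      rw [← hσ]; simpa using hk
    refine le_antisymm ?_ (hpos _)
    rw [← hk']
    exact hmono (Fin.mk_le_of_le_val (Nat.zero_le _))
  have hfil : ∑ k ∈ Finset.univ.filter (fun k : Fin n => k ≠ ⟨0, by omega⟩), (μ k)⁻¹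
      = ∑ k, (μ k)⁻¹ := by
    refine Finset.sum_subset (Finset.subset_univ _) fun k _ hk => ?_
    have : k = ⟨0, by omega⟩ := by simpa using hk
    rw [this, hzero, _root_.inv_zero]
  have hre : ∑ k, (μ k)⁻¹ = ∑ k, (hL.eigenvalues k)⁻¹ := by
    rw [← hσ]
    exact Equiv.sum_comp σ (fun k => (hL.eigenvalues k)⁻¹)
  rw [hfil, hre, ← htr, hsum, htotal]
  ring
end

section
/- Let $G$ be a finite simple connected graph on $n \ge 2$ vertices with combinatorial Laplacian eigenvalues $0 = \lambda_1 < \lambda_2 \le \cdots \le \lambda_n$ (listed with multiplicity). Then the number of spanning trees of $G$ equals $\frac{1}{n} \prod_{k=2}^{n} \lambda_k$. -/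
open Finset

namespace MTT

variable {V : Type*} [Fintype V] [DecidableEq V]

/-- Parent matrix of a function `f` with root `r`. -/
noncomputable def P (r : V) (f : V → V) : Matrix V V ℝ :=
  Matrix.of fun i => if i = r then 0 else Pi.single (f i) 1

theorem P_mulVec (r : V) (f : V → V) (v : V → ℝ) (i : V) :
    (P r f).mulVec v i = if i = r then 0 else v (f i) := by
  unfold P Matrix.mulVec
  by_cases h : i = r <;> simp [h]

theorem P_pow (r : V) (f : V → V) (v : V → ℝ) (k : ℕ) :
    ∀ (i : V) (m : ℕ), m < k → f^[m] i = r → ((P r f) ^ k).mulVec v i = 0 := by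
  induction k with
  | zero => intro i m hm; omega
  | succ k ih =>
    intro i m hm h
    rw [pow_succ', ← Matrix.mulVec_mulVec, P_mulVec]
    split_ifs with hi
    · rfl
    · cases m with
      | zero => exact absurd h hi
      | succ m => exact ih (f i) m (by omega) h

theorem det_of_reach (r : V) (f : V → V) (h : ∀ i, ∃ m, f^[m] i = r) :
    (1 - P r f).det = 1 := by
  have hn : IsNilpotent (P r f) := by
    choose d hd using h
    refine ⟨∑ i, d i + 1, ?_⟩
    apply Matrix.ext_of_mulVec_single
    intro j
    ext i
    rw [P_pow r f _ _ i (d i) _ (hd i)]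
    · simp
    · have := Finset.single_le_sum (f := d) (fun _ _ => Nat.zero_le _) (Finset.mem_univ i)
      omega
  have h2 := (Matrix.isNilpotent_charpoly_sub_pow_of_isNilpotent hn).eq_zero
  have h3 := Matrix.eval_charpoly (P r f) 1
  rw [sub_eq_zero.mp h2] at h3
  simpa using h3.symm

theorem det_of_not_reach (r : V) (f : V → V) (hr : f r = r) (h : ¬ ∀ i, ∃ m, f^[m] i = r) :
    (1 - P r f).det = 0 := by
  classical
  rw [← Matrix.exists_mulVec_eq_zero_iff]
  push Not at h
  obtain ⟨i₀, hi₀⟩ := h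
  refine ⟨fun i => if ∃ m, f^[m] i = r then 0 else 1, ?_, ?_⟩
  · intro h
    have := congrFun h i₀
    simp [hi₀] at this
  · ext i
    rw [Matrix.sub_mulVec, Matrix.one_mulVec, Pi.sub_apply, P_mulVec]
    by_cases hi : i = r
    · have : ∃ m, f^[m] i = r := ⟨0, hi⟩
      simp only [if_pos hi, if_pos this]; simp
    · have : (∃ m, f^[m] i = r) ↔ (∃ m, f^[m] (f i) = r) := by
        constructor
        · rintro ⟨m, hm⟩
          cases m with
          | zero => exact absurd hm hi
          | succ m => exact ⟨m, hm⟩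
        · rintro ⟨m, hm⟩; exact ⟨m + 1, hm⟩
      simp only [if_neg hi, this]; simp

/-- Candidate parents. -/
def S (G : SimpleGraph V) [DecidableRel G.Adj] (r i : V) : Finset V :=
  if i = r then {r} else G.neighborFinset i

/-- The graph of a parent function. -/
def T (f : V → V) : SimpleGraph V := SimpleGraph.fromRel (fun i j => f i = j)

theorem adjugate_eq (G : SimpleGraph V) [DecidableRel G.Adj] (r : V) :
    (G.lapMatrix ℝ).adjugate r r =
      ∑ f ∈ Fintype.piFinset (S G r), (1 - P r f).det := by
  rw [Matrix.adjugate_apply]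
  have key := (Matrix.detRowAlternating (n := V) (R := ℝ)).toMultilinearMap.map_sum_finset
    (fun i j => if i = r then Pi.single r 1 else Pi.single i 1 - Pi.single j 1) (S G r)
  have e1 : (G.lapMatrix ℝ).updateRow r (Pi.single r 1) = fun i => ∑ j ∈ S G r i,
      (if i = r then Pi.single r (1:ℝ) else Pi.single i 1 - Pi.single j 1 : V → ℝ) := by
    ext i k
    by_cases hi : i = r
    · subst hi; simp [S]
    · rw [Matrix.updateRow_ne hi]
      simp only [S, if_neg hi, Finset.sum_apply, Pi.sub_apply, Finset.sum_sub_distrib]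
      simp only [SimpleGraph.lapMatrix, SimpleGraph.degMatrix, Matrix.sub_apply,
        Matrix.diagonal_apply, SimpleGraph.adjMatrix_apply, Pi.single_apply]
      simp [eq_comm]
  rw [e1]
  refine key.trans (Finset.sum_congr rfl fun f _ => ?_)
  change Matrix.det _ = _
  congr 1
  ext i k
  by_cases hi : i = r
  · subst hi; simp [P, Matrix.one_apply, Pi.single_apply, eq_comm]
  · simp [P, hi, Ne.symm hi, Matrix.one_apply, Pi.single_apply, eq_comm]

theorem T_connected (r : V) (f : V → V) (h : ∀ i, ∃ m, f^[m] i = r) : (T f).Connected := by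
  have key : ∀ m i, f^[m] i = r → (T f).Reachable i r := by
    intro m
    induction m with
    | zero => rintro i rfl; exact SimpleGraph.Reachable.refl _
    | succ m ih =>
      intro i hi
      have h1 := ih (f i) hi
      by_cases hf : i = f i
      · rw [hf]; exact h1
      · exact (SimpleGraph.Adj.reachable (by simp [T, hf])).trans h1
  haveI : Nonempty V := ⟨r⟩
  refine ⟨fun a b => ?_⟩
  obtain ⟨m, hm⟩ := h a
  obtain ⟨k, hk⟩ := h b
  exact (key m a hm).trans (key k b hk).symm

theorem T_isTree (r : V) (f : V → V) (hr : f r = r) (h : ∀ i, ∃ m, f^[m] i = r) :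
    (T f).IsTree := by
  have hc := T_connected r f h
  rw [SimpleGraph.isTree_iff_connected_and_card]
  refine ⟨hc, le_antisymm ?_ hc.card_vert_le_card_edgeSet_add_one⟩
  have hsub : (T f).edgeSet ⊆ ((Finset.univ.erase r).image (fun i => s(i, f i)) : Finset (Sym2 V)) := by
    intro e
    induction e using Sym2.ind with
    | _ a b =>
      intro hab
      simp only [T, SimpleGraph.mem_edgeSet, SimpleGraph.fromRel_adj] at hab
      simp only [Finset.coe_image, Set.mem_image, Finset.mem_coe, Finset.mem_erase,
        Finset.mem_univ, and_true]
      obtain ⟨hne, h1 | h1⟩ := hab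
      · exact ⟨a, by rintro rfl; exact hne (hr.symm.trans h1), by rw [h1]⟩
      · exact ⟨b, by rintro rfl; exact hne (h1.symm.trans hr), by rw [h1, Sym2.eq_swap]⟩
  have h1 := Set.ncard_le_ncard hsub (Finset.finite_toSet _)
  rw [Set.ncard_coe_finset] at h1
  have h2 := h1.trans Finset.card_image_le
  rw [Finset.card_erase_of_mem (Finset.mem_univ r), Finset.card_univ] at h2
  have : 0 < Fintype.card V := Fintype.card_pos_iff.mpr ⟨r⟩
  rw [Nat.card_coe_set_eq, Nat.card_eq_fintype_card]
  omega

theorem T_inj (r : V) (f g : V → V) (hfr : f r = r) (hgr : g r = r)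
    (hf : ∀ i, ∃ m, f^[m] i = r) (hne : ∀ i, i ≠ r → f i ≠ i) (h : T f = T g) : f = g := by
  have key : ∀ m i, f^[m] i = r → f i = g i := by
    intro m
    induction m with
    | zero => rintro i rfl; exact hfr.trans hgr.symm
    | succ m ih =>
      intro i hi
      by_cases hir : i = r
      · rw [hir, hfr, hgr]
      have h1 := ih (f i) hi
      have hadj : (T f).Adj i (f i) := by simp [T, (hne i hir).symm]
      rw [h] at hadj
      simp only [T, SimpleGraph.fromRel_adj] at hadj
      rcases hadj.2 with h2 | h2
      · exact h2.symm
      · exfalso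
        have h3 : f (f i) = i := h1.trans h2
        have h4 : f i ≠ r := fun h5 => by rw [h5, hfr] at h3; exact hir h3.symm
        have : ∀ k, f^[k] i ≠ r ∧ f^[k] (f i) ≠ r := by
          intro k
          induction k with
          | zero => exact ⟨hir, h4⟩
          | succ k ihk =>
            rw [Function.iterate_succ_apply, Function.iterate_succ_apply, h3]
            exact ⟨ihk.2, ihk.1⟩
        obtain ⟨k, hk⟩ := hf i
        exact (this k).1 hk
  ext i
  obtain ⟨m, hm⟩ := hf i
  exact key m i hm

theorem T_surj (r : V) (H : SimpleGraph V) (hH : H.IsTree) :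
    ∃ f : V → V, f r = r ∧ (∀ i, i ≠ r → H.Adj i (f i)) ∧ (∀ i, ∃ m, f^[m] i = r) ∧ T f = H := by
  have hc : H.Connected := hH.1
  have ex : ∀ i, ∃ j, (i = r → j = r) ∧ (i ≠ r → H.Adj i j ∧ H.dist j r < H.dist i r) := by
    intro i
    by_cases hi : i = r
    · exact ⟨r, fun _ => rfl, fun h => absurd hi h⟩
    · obtain ⟨p, hp⟩ := hc.exists_walk_length_eq_dist i r
      cases p with
      | nil => exact absurd rfl hi
      | cons hadj q =>
        refine ⟨_, fun h => absurd h hi, fun _ => ⟨hadj, ?_⟩⟩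
        have := SimpleGraph.dist_le q
        rw [SimpleGraph.Walk.length_cons] at hp
        omega
  choose f hf1 hf2 using ex
  have hreach : ∀ k i, H.dist i r ≤ k → ∃ m, f^[m] i = r := by
    intro k
    induction k with
    | zero =>
      intro i hi
      by_cases hir : i = r
      · exact ⟨0, hir⟩
      · have := (hf2 i hir).2; omega
    | succ k ih =>
      intro i hi
      by_cases hir : i = r
      · exact ⟨0, hir⟩
      · have := (hf2 i hir).2
        obtain ⟨m, hm⟩ := ih (f i) (by omega)
        exact ⟨m + 1, hm⟩
  have hreach' : ∀ i, ∃ m, f^[m] i = r := fun i => hreach _ i le_rfl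
  refine ⟨f, hf1 r rfl, fun i hi => (hf2 i hi).1, hreach', ?_⟩
  have hle : T f ≤ H := by
    intro a b hab
    simp only [T, SimpleGraph.fromRel_adj] at hab
    obtain ⟨hne, h | h⟩ := hab
    · have : a ≠ r := by rintro rfl; exact hne ((hf1 a rfl).symm.trans h)
      rw [← h]; exact (hf2 a this).1
    · have : b ≠ r := by rintro rfl; exact hne (h.symm.trans (hf1 b rfl))
      rw [← h]; exact (hf2 b this).1.symm
  exact le_antisymm hle
    ((SimpleGraph.isTree_iff_minimal_connected.mp hH).2 (T_connected r f hreach') hle)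

theorem minor_eq (G : SimpleGraph V) [DecidableRel G.Adj] (r : V) :
    (G.lapMatrix ℝ).adjugate r r =
      (({T : SimpleGraph V | T ≤ G ∧ T.IsTree}).ncard : ℝ) := by
  classical
  rw [adjugate_eq]
  have hS : ∀ f ∈ Fintype.piFinset (S G r), f r = r ∧ ∀ i, i ≠ r → G.Adj i (f i) := by
    intro f hf
    rw [Fintype.mem_piFinset] at hf
    refine ⟨by simpa [S] using hf r, fun i hi => by simpa [S, hi] using hf i⟩
  have e1 : ∑ f ∈ Fintype.piFinset (S G r), (1 - P r f).det =
      ∑ f ∈ Fintype.piFinset (S G r), if (∀ i, ∃ m, f^[m] i = r) then (1:ℝ) else 0 := by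
    refine Finset.sum_congr rfl fun f hf => ?_
    split_ifs with h
    · exact det_of_reach r f h
    · exact det_of_not_reach r f (hS f hf).1 h
  rw [e1, Finset.sum_boole]
  congr 1
  have e2 : {T : SimpleGraph V | T ≤ G ∧ T.IsTree} = Set.image T
      ((Fintype.piFinset (S G r)).filter (fun f => ∀ i, ∃ m, f^[m] i = r) : Finset (V → V)) := by
    ext H
    simp only [Set.mem_setOf_eq, Set.mem_image, Finset.mem_coe, Finset.mem_filter]
    constructor
    · rintro ⟨hle, hH⟩
      obtain ⟨f, h1, h2, h3, h4⟩ := T_surj r H hH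
      refine ⟨f, ⟨?_, h3⟩, h4⟩
      rw [Fintype.mem_piFinset]
      intro i
      by_cases hi : i = r
      · simp [S, hi, h1]
      · simpa [S, hi] using hle (h2 i hi)
    · rintro ⟨f, ⟨hf, hreach⟩, rfl⟩
      obtain ⟨h1, h2⟩ := hS f hf
      refine ⟨?_, T_isTree r f h1 hreach⟩
      intro a b hab
      simp only [T, SimpleGraph.fromRel_adj] at hab
      obtain ⟨hne, h | h⟩ := hab
      · have : a ≠ r := by rintro rfl; exact hne (h1.symm.trans h)
        rw [← h]; exact h2 a this
      · have : b ≠ r := by rintro rfl; exact hne (h.symm.trans h1)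
        rw [← h]; exact (h2 b this).symm
  rw [e2, Set.ncard_image_of_injOn, Set.ncard_coe_finset]
  intro f hf g hg hfg
  simp only [Finset.mem_coe, Finset.mem_filter] at hf hg
  exact T_inj r f g (hS f hf.1).1 (hS g hg.1).1 hf.2
    (fun i hi => ((hS f hf.1).2 i hi).ne') hfg

theorem trace_adjugate {A : Matrix V V ℝ} (hA : A.IsHermitian) :
    A.adjugate.trace = ∑ i, ∏ j ∈ Finset.univ.erase i, hA.eigenvalues j := by
  have h := hA.spectral_theorem
  rw [Unitary.conjStarAlgAut_apply] at h
  have hu : star (hA.eigenvectorUnitary : Matrix V V ℝ) * (hA.eigenvectorUnitary : Matrix V V ℝ) = 1 :=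
    Unitary.coe_star_mul_self _
  conv_lhs => rw [h]
  rw [Matrix.adjugate_mul_distrib, Matrix.adjugate_mul_distrib, ← mul_assoc,
    Matrix.trace_mul_comm, ← mul_assoc, ← Matrix.adjugate_mul_distrib, hu,
    Matrix.adjugate_one, one_mul, Matrix.adjugate_diagonal, Matrix.trace_diagonal]
  rfl

end MTT

/-- **Matrix-tree theorem.**  For a finite simple connected graph on `n ≥ 2` vertices
with combinatorial Laplacian eigenvalues `0 = λ₁ < λ₂ ≤ ⋯ ≤ λₙ` (here `μ` is a monotone
enumeration of the eigenvalues), the number of spanning trees (spanning subgraphs that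
are connected and acyclic) equals `(1/n) ∏_{k=2}^{n} λₖ`. -/
theorem card_spanningTrees_eq
    {n : ℕ} (hn : 1 < n) (G : SimpleGraph (Fin n)) [DecidableRel G.Adj]
    (hG : G.Connected)
    (hL : (G.lapMatrix ℝ).IsHermitian)
    (μ : Fin n → ℝ) (hmono : Monotone μ)
    (hperm : ∃ σ : Equiv.Perm (Fin n), hL.eigenvalues ∘ σ = μ) :
    (({T : SimpleGraph (Fin n) | T ≤ G ∧ T.IsTree}).ncard : ℝ) =
      (1 / (n : ℝ)) * ∏ k ∈ Finset.univ.filter (fun k : Fin n => k ≠ ⟨0, by omega⟩), μ k := by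
  obtain ⟨σ, hσ⟩ := hperm
  set z : Fin n := ⟨0, by omega⟩ with hz
  have hμ : ∀ i, μ i = hL.eigenvalues (σ i) := fun i => (congrFun hσ i).symm
  have hnn : ∀ i, 0 ≤ μ i := fun i => by
    rw [hμ]; exact (SimpleGraph.posSemidef_lapMatrix ℝ G).eigenvalues_nonneg _
  have hdet : (G.lapMatrix ℝ).det = 0 := by
    rw [← Matrix.exists_mulVec_eq_zero_iff]
    exact ⟨fun _ => 1, fun h => one_ne_zero (congrFun h z), G.lapMatrix_mulVec_const_eq_zero⟩
  have h0 : μ z = 0 := by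
    rw [hL.det_eq_prod_eigenvalues, Finset.prod_eq_zero_iff] at hdet
    obtain ⟨i, -, hi⟩ := hdet
    have h1 : μ (σ.symm i) = 0 := by rw [hμ]; simpa using hi
    have h2 : μ z ≤ μ (σ.symm i) := hmono (by simp [hz, Fin.le_def])
    linarith [hnn z]
  have htr := MTT.trace_adjugate hL
  have hl : (G.lapMatrix ℝ).adjugate.trace =
      n * (({T : SimpleGraph (Fin n) | T ≤ G ∧ T.IsTree}).ncard : ℝ) := by
    simp [Matrix.trace, MTT.minor_eq]
  have hr : ∑ i, ∏ j ∈ Finset.univ.erase i, hL.eigenvalues j =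
      ∏ k ∈ Finset.univ.filter (fun k : Fin n => k ≠ z), μ k := by
    rw [← Equiv.sum_comp σ, Finset.sum_eq_single z]
    · rw [Finset.filter_ne']
      symm
      refine Finset.prod_bij (fun i _ => σ i) ?_ ?_ ?_ ?_
      · intro a ha; simpa using ha
      · intro a _ b _ h; exact σ.injective h
      · intro b hb
        refine ⟨σ.symm b, ?_, by simp⟩
        simp only [Finset.mem_erase, Finset.mem_univ, and_true] at hb ⊢
        rintro h; exact hb (by rw [← h]; simp)
      · intro a _; exact hμ a
    · intro b _ hb
      refine Finset.prod_eq_zero (i := σ z) ?_ ((hμ z).symm.trans h0)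
      simpa using hb.symm
    · simp
  rw [← hr, ← htr, hl]
  have : (n : ℝ) ≠ 0 := by positivity
  field_simp
end

section
/- Let $G$ be a finite simple connected graph and let $e = (i,j)$ be an edge of $G$. If $T$ is a uniformly random spanning tree of $G$, then the probability that $e$ is an edge of $T$ equals the effective resistance $\omega(i,j)$. -/
open Matrix

open Classical in
/-- Indicator of reachability. -/
noncomputable def rInd {n : ℕ} (F : SimpleGraph (Fin n)) (a b : Fin n) : ℝ :=
  if F.Reachable a b then 1 else 0

/-- `F` is a spanning forest of `G` with two components, separating `x` and `y`. -/
def IsThicket {n : ℕ} (G : SimpleGraph (Fin n)) (x y : Fin n) (F : SimpleGraph (Fin n)) : Prop :=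
  F ≤ G ∧ F.IsAcyclic ∧ ¬ F.Reachable x y ∧ ∀ v, F.Reachable v x ∨ F.Reachable v y

lemma tree_not_reach {n : ℕ} {T : SimpleGraph (Fin n)} (hT : T.IsTree) {x y : Fin n}
    (h : T.Adj x y) : ¬ (T.deleteEdges {s(x, y)}).Reachable x y := by
  have := SimpleGraph.isAcyclic_iff_forall_adj_isBridge.1 hT.isAcyclic h
  rwa [SimpleGraph.isBridge_iff] at this

lemma tree_cover {n : ℕ} {T : SimpleGraph (Fin n)} (hT : T.IsTree) (x y v : Fin n) :
    (T.deleteEdges {s(x, y)}).Reachable v x ∨ (T.deleteEdges {s(x, y)}).Reachable v y := by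
  obtain ⟨p⟩ := hT.connected.preconnected v x
  suffices H : ∀ (u w : Fin n) (p : T.Walk u w), w = x →
    (T.deleteEdges {s(x, y)}).Reachable u x ∨ (T.deleteEdges {s(x, y)}).Reachable u y from
      H v x p rfl
  intro u w p
  induction p with
  | nil => rintro rfl; exact Or.inl (SimpleGraph.Reachable.refl _)
  | @cons a b c hab q ih =>
    intro hc
    by_cases he : s(a, b) = s(x, y)
    · rw [Sym2.eq_iff] at he
      rcases he with ⟨rfl, rfl⟩ | ⟨rfl, rfl⟩
      · exact Or.inl (SimpleGraph.Reachable.refl _)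
      · exact Or.inr (SimpleGraph.Reachable.refl _)
    · have hadj : (T.deleteEdges {s(x, y)}).Adj a b := by
        rw [SimpleGraph.deleteEdges_adj]
        exact ⟨hab, by simpa using he⟩
      exact (ih hc).imp hadj.reachable.trans hadj.reachable.trans

lemma tree_to_thicket {n : ℕ} {G T : SimpleGraph (Fin n)} (hTG : T ≤ G) (hT : T.IsTree)
    {x y : Fin n} (h : T.Adj x y) : IsThicket G x y (T.deleteEdges {s(x, y)}) :=
  ⟨(SimpleGraph.deleteEdges_le _).trans hTG, hT.isAcyclic.anti (SimpleGraph.deleteEdges_le _),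
    tree_not_reach hT h, tree_cover hT x y⟩

lemma thicket_to_tree {n : ℕ} {G F : SimpleGraph (Fin n)} {x y : Fin n} (hxy : G.Adj x y)
    (hF : IsThicket G x y F) :
    F ⊔ SimpleGraph.edge x y ≤ G ∧ (F ⊔ SimpleGraph.edge x y).IsTree ∧
      (F ⊔ SimpleGraph.edge x y).Adj x y := by
  obtain ⟨hle, hac, hn, hc⟩ := hF
  have hadj : (F ⊔ SimpleGraph.edge x y).Adj x y := by
    rw [SimpleGraph.sup_adj]; right
    rw [SimpleGraph.edge_adj]
    exact ⟨Or.inl ⟨rfl, rfl⟩, hxy.ne⟩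
  refine ⟨sup_le hle ?_, ⟨?_, SimpleGraph.IsAcyclic.sup_edge_of_not_reachable hn hac⟩, hadj⟩
  · intro a b hab
    rw [SimpleGraph.edge_adj] at hab
    rcases hab with ⟨⟨rfl, rfl⟩ | ⟨rfl, rfl⟩, _⟩
    · exact hxy
    · exact hxy.symm
  · have key : ∀ v, (F ⊔ SimpleGraph.edge x y).Reachable v x := fun v => by
      rcases hc v with h | h
      · exact h.mono le_sup_left
      · exact (h.mono le_sup_left).trans hadj.symm.reachable
    have : Nonempty (Fin n) := ⟨x⟩
    exact ⟨fun u v => (key u).trans (key v).symm⟩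

lemma del_sup {n : ℕ} {T : SimpleGraph (Fin n)} {x y : Fin n} (h : T.Adj x y) :
    T.deleteEdges {s(x, y)} ⊔ SimpleGraph.edge x y = T := by
  ext a b
  have := h.symm
  have := h.ne
  simp only [SimpleGraph.sup_adj, SimpleGraph.deleteEdges_adj, SimpleGraph.edge_adj,
    Set.mem_singleton_iff, Sym2.eq_iff]
  grind

lemma sup_del {n : ℕ} {F : SimpleGraph (Fin n)} {x y : Fin n} (h : ¬ F.Reachable x y) :
    (F ⊔ SimpleGraph.edge x y).deleteEdges {s(x, y)} = F := by
  have h1 : ¬ F.Adj x y := fun h' => h h'.reachable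
  have h2 : ¬ F.Adj y x := fun h' => h h'.symm.reachable
  ext a b
  simp only [SimpleGraph.sup_adj, SimpleGraph.deleteEdges_adj, SimpleGraph.edge_adj,
    Set.mem_singleton_iff, Sym2.eq_iff]
  grind

lemma thicket_swap {n : ℕ} {G F : SimpleGraph (Fin n)} {x y i j : Fin n}
    (hF : IsThicket G x y F) (h : ¬ F.Reachable i j) : IsThicket G i j F := by
  obtain ⟨hle, hac, hn, hc⟩ := hF
  refine ⟨hle, hac, h, fun v => ?_⟩
  rcases hc v with h1 | h1 <;> rcases hc i with h2 | h2 <;> rcases hc j with h3 | h3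
  · exact Or.inl (h1.trans h2.symm)
  · exact Or.inl (h1.trans h2.symm)
  · exact Or.inr (h1.trans h3.symm)
  · exact absurd (h2.trans h3.symm) h
  · exact absurd (h2.trans h3.symm) h
  · exact Or.inr (h1.trans h3.symm)
  · exact Or.inl (h1.trans h2.symm)
  · exact Or.inl (h1.trans h2.symm)

open Classical in
lemma sum_tree_eq_sum_thicket {n : ℕ} {G : SimpleGraph (Fin n)} {x y : Fin n} (hxy : G.Adj x y)
    (f : SimpleGraph (Fin n) → ℝ) :
    ∑ T : SimpleGraph (Fin n) with T ≤ G ∧ T.IsTree ∧ T.Adj x y, f (T.deleteEdges {s(x, y)}) =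
      ∑ F : SimpleGraph (Fin n) with IsThicket G x y F, f F := by
  refine Finset.sum_bij' (fun T _ => T.deleteEdges {s(x, y)}) (fun F _ => F ⊔ SimpleGraph.edge x y)
    ?_ ?_ ?_ ?_ ?_
  · intro T hT
    simp only [Finset.mem_filter, Finset.mem_univ, true_and] at hT ⊢
    exact tree_to_thicket hT.1 hT.2.1 hT.2.2
  · intro F hF
    simp only [Finset.mem_filter, Finset.mem_univ, true_and] at hF ⊢
    exact thicket_to_tree hxy hF
  · intro T hT
    simp only [Finset.mem_filter, Finset.mem_univ, true_and] at hT
    exact del_sup hT.2.2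
  · intro F hF
    simp only [Finset.mem_filter, Finset.mem_univ, true_and] at hF
    exact sup_del hF.2.2.1
  · intros; rfl

lemma rInd_congr {n : ℕ} {F : SimpleGraph (Fin n)} {a b c d : Fin n}
    (h : F.Reachable a b ↔ F.Reachable c d) : rInd F a b = rInd F c d := by
  unfold rInd
  by_cases h' : F.Reachable c d
  · rw [if_pos h', if_pos (h.2 h')]
  · rw [if_neg h', if_neg (fun hab => h' (h.1 hab))]

open Classical in
lemma sum_thicket_swap {n : ℕ} (G : SimpleGraph (Fin n)) (x y i j : Fin n) :
    ∑ F : SimpleGraph (Fin n) with IsThicket G x y F, (rInd F i x - rInd F j x) =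
      ∑ F : SimpleGraph (Fin n) with IsThicket G i j F, (rInd F x i - rInd F y i) := by
  rw [Finset.sum_filter, Finset.sum_filter]
  refine Finset.sum_congr rfl fun F _ => ?_
  by_cases hij : F.Reachable i j
  · have h2 : ¬ IsThicket G i j F := fun h => h.2.2.1 hij
    rw [if_neg h2, rInd_congr (c := j) (d := x) ⟨hij.symm.trans, hij.trans⟩]
    simp
  · by_cases hxy : F.Reachable x y
    · have h2 : ¬ IsThicket G x y F := fun h => h.2.2.1 hxy
      rw [if_neg h2, rInd_congr (a := x) (b := i) (c := y) (d := i) ⟨hxy.symm.trans, hxy.trans⟩]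
      simp
    · by_cases h : IsThicket G x y F
      · have h' := thicket_swap h hij
        rw [if_pos h, if_pos h']
        congr 1
        · exact rInd_congr ⟨fun h => h.symm, fun h => h.symm⟩
        · refine rInd_congr ⟨fun hjx => ?_, fun hyi => ?_⟩
          · rcases h'.2.2.2 y with hy | hy
            · exact hy
            · exact absurd (hy.trans hjx).symm hxy
          · rcases h.2.2.2 j with hy | hy
            · exact hy
            · exact absurd (hy.trans hyi).symm hij
      · have h' : ¬ IsThicket G i j F := fun h' => h (thicket_swap h' hxy)
        rw [if_neg h, if_neg h']

open Classical in
lemma tree_flow {n : ℕ} {T : SimpleGraph (Fin n)} (hT : T.IsTree) (x i : Fin n) :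
    ∑ y : Fin n with T.Adj x y, (1 - rInd (T.deleteEdges {s(x, y)}) i x) =
      if x = i then 0 else 1 := by
  split_ifs with hxi
  · subst hxi
    refine Finset.sum_eq_zero fun y _ => ?_
    simp [rInd]
  · obtain ⟨p, hp⟩ := (hT.connected.preconnected x i).exists_isPath
    cases p with
    | nil => exact absurd rfl hxi
    | @cons _ y _ hadj q =>
      rw [SimpleGraph.Walk.cons_isPath_iff] at hp
      have hq : ∀ z, s(x, z) ∉ q.edges := fun z hz =>
        hp.2 (q.fst_mem_support_of_mem_edges hz)
      rw [Finset.sum_eq_single y]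
      · have hyi : (T.deleteEdges {s(x, y)}).Reachable y i :=
          SimpleGraph.reachable_deleteEdges_iff_exists_walk.2 ⟨q, hq y⟩
        have : ¬ (T.deleteEdges {s(x, y)}).Reachable i x := fun h =>
          tree_not_reach hT hadj (hyi.trans h).symm
        simp [rInd, this]
      · intro z _ hzy
        have : (T.deleteEdges {s(x, z)}).Reachable x i := by
          refine SimpleGraph.reachable_deleteEdges_iff_exists_walk.2
            ⟨SimpleGraph.Walk.cons hadj q, ?_⟩
          rw [SimpleGraph.Walk.edges_cons, List.mem_cons, not_or]
          refine ⟨fun h => hzy ?_, hq z⟩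
          have := hadj.ne
          rw [Sym2.eq_iff] at h
          grind
        simp [rInd, this.symm]
      · intro h
        simp [hadj] at h

/-- The (unnormalised) potential. -/
noncomputable def potential {n : ℕ} (G : SimpleGraph (Fin n)) (i j x : Fin n) : ℝ :=
  open Classical in ∑ F : SimpleGraph (Fin n) with IsThicket G i j F, rInd F x i

open Classical in
lemma lap_potential {n : ℕ} (G : SimpleGraph (Fin n)) [DecidableRel G.Adj] (i j : Fin n) :
    (G.lapMatrix ℝ).mulVec (potential G i j) =
      ((Finset.univ.filter fun T : SimpleGraph (Fin n) => T ≤ G ∧ T.IsTree).card : ℝ) •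
        (Pi.single i (1 : ℝ) - Pi.single j 1) := by
  ext x
  rw [SimpleGraph.lapMatrix_mulVec_apply]
  have h1 : (G.degree x : ℝ) * potential G i j x - ∑ u ∈ G.neighborFinset x, potential G i j u =
      ∑ y ∈ G.neighborFinset x, ∑ T : SimpleGraph (Fin n) with T ≤ G ∧ T.IsTree ∧ T.Adj x y,
        (rInd (T.deleteEdges {s(x, y)}) i x - rInd (T.deleteEdges {s(x, y)}) j x) := by
    rw [← SimpleGraph.card_neighborFinset_eq_degree, ← nsmul_eq_mul, ← Finset.sum_const,
      ← Finset.sum_sub_distrib]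
    refine Finset.sum_congr rfl fun y hy => ?_
    rw [SimpleGraph.mem_neighborFinset] at hy
    rw [sum_tree_eq_sum_thicket hy (fun F => rInd F i x - rInd F j x), sum_thicket_swap,
      Finset.sum_sub_distrib]
    rfl
  rw [h1]
  have h2 : ∑ y ∈ G.neighborFinset x, ∑ T : SimpleGraph (Fin n) with T ≤ G ∧ T.IsTree ∧ T.Adj x y,
        (rInd (T.deleteEdges {s(x, y)}) i x - rInd (T.deleteEdges {s(x, y)}) j x) =
      ∑ T : SimpleGraph (Fin n) with T ≤ G ∧ T.IsTree, ∑ y : Fin n with T.Adj x y,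
        (rInd (T.deleteEdges {s(x, y)}) i x - rInd (T.deleteEdges {s(x, y)}) j x) := by
    refine Finset.sum_comm' fun y T => ?_
    simp only [SimpleGraph.mem_neighborFinset, Finset.mem_filter, Finset.mem_univ, true_and]
    exact ⟨fun h => ⟨h.2.2.2, h.2.1, h.2.2.1⟩, fun h => ⟨h.2.1 h.1, h.2.1, h.2.2, h.1⟩⟩
  rw [h2]
  have h3 : ∀ T ∈ Finset.univ.filter (fun T : SimpleGraph (Fin n) => T ≤ G ∧ T.IsTree),
      ∑ y : Fin n with T.Adj x y,
        (rInd (T.deleteEdges {s(x, y)}) i x - rInd (T.deleteEdges {s(x, y)}) j x) =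
      (Pi.single i (1 : ℝ) - Pi.single j 1 : Fin n → ℝ) x := by
    intro T hT
    simp only [Finset.mem_filter, Finset.mem_univ, true_and] at hT
    have hi := tree_flow hT.2 x i
    have hj := tree_flow hT.2 x j
    rw [Finset.sum_sub_distrib] at hi hj ⊢
    rw [Pi.sub_apply, Pi.single_apply, Pi.single_apply]
    split_ifs at hi hj ⊢ <;> linarith
  rw [Finset.sum_congr rfl h3, Finset.sum_const, nsmul_eq_mul]
  rfl

/-- **Edge probability in a uniform random spanning tree equals effective resistance.**
For an edge `(i,j)` of a finite simple connected graph `G`, the probability that a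
uniformly random spanning tree of `G` contains the edge — i.e. the number of spanning
trees containing it divided by the total number of spanning trees — equals `ω(i,j)`. -/
theorem prob_edge_mem_uniform_spanning_tree_eq_effectiveResistance
    {n : ℕ} (G : SimpleGraph (Fin n)) [DecidableRel G.Adj] (hG : G.Connected)
    (i j : Fin n) (hij : G.Adj i j)
    (M : Matrix (Fin n) (Fin n) ℝ)
    (hM : IsMoorePenroseInverse (G.lapMatrix ℝ) M) :
    (({T : SimpleGraph (Fin n) | T ≤ G ∧ T.IsTree ∧ T.Adj i j}).ncard : ℝ) /
        (({T : SimpleGraph (Fin n) | T ≤ G ∧ T.IsTree}).ncard : ℝ) =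
      effectiveResistance M i j := by
  classical
  have hN : ({T : SimpleGraph (Fin n) | T ≤ G ∧ T.IsTree}).ncard =
      (Finset.univ.filter fun T : SimpleGraph (Fin n) => T ≤ G ∧ T.IsTree).card := by
    rw [← Set.ncard_coe_finset]; simp
  have hK : (({T : SimpleGraph (Fin n) | T ≤ G ∧ T.IsTree ∧ T.Adj i j}).ncard : ℝ) =
      potential G i j i - potential G i j j := by
    have h1 : ({T : SimpleGraph (Fin n) | T ≤ G ∧ T.IsTree ∧ T.Adj i j}).ncard =
      (Finset.univ.filter fun T : SimpleGraph (Fin n) => T ≤ G ∧ T.IsTree ∧ T.Adj i j).card := by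
      rw [← Set.ncard_coe_finset]; simp
    have h2 := sum_tree_eq_sum_thicket hij (fun _ => 1)
    rw [Finset.sum_const, nsmul_eq_mul, mul_one] at h2
    rw [h1, h2]
    unfold potential
    rw [← Finset.sum_sub_distrib]
    refine Finset.sum_congr (by ext; simp) fun F hF => ?_
    simp only [Finset.mem_filter, Finset.mem_univ, true_and] at hF
    have : ¬ F.Reachable j i := fun h => hF.2.2.1 h.symm
    simp [rInd, this]
  have hpos : ((Finset.univ.filter fun T : SimpleGraph (Fin n) => T ≤ G ∧ T.IsTree).card : ℝ)
      ≠ 0 := by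
    obtain ⟨T, hT, hT'⟩ := hG.exists_isTree_le
    have : 0 < (Finset.univ.filter fun T : SimpleGraph (Fin n) => T ≤ G ∧ T.IsTree).card :=
      Finset.card_pos.2 ⟨T, by simp [hT, hT']⟩
    positivity
  have hL := lap_potential G i j
  rw [hK, hN]
  unfold effectiveResistance
  generalize ((Finset.univ.filter fun T : SimpleGraph (Fin n) => T ≤ G ∧ T.IsTree).card : ℝ) = N
    at *
  generalize potential G i j = v at *
  have hd : v ⬝ᵥ (Pi.single i (1 : ℝ) - Pi.single j 1) = v i - v j := by
    simp [dotProduct_sub]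
  generalize (Pi.single i (1 : ℝ) - Pi.single j 1 : Fin n → ℝ) = d at *
  have hsym : (G.lapMatrix ℝ)ᵀ = G.lapMatrix ℝ := SimpleGraph.isSymm_lapMatrix ℝ G
  have h1 : ((G.lapMatrix ℝ).mulVec v) ⬝ᵥ M.mulVec ((G.lapMatrix ℝ).mulVec v) =
      v ⬝ᵥ (G.lapMatrix ℝ).mulVec v := by
    conv_rhs => rw [← hM.1]
    rw [← mulVec_mulVec, ← mulVec_mulVec, dotProduct_mulVec v, ← mulVec_transpose, hsym]
  rw [hL, mulVec_smul, smul_dotProduct, dotProduct_smul, dotProduct_smul, hd, smul_eq_mul,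
    smul_eq_mul, smul_eq_mul] at h1
  rw [div_eq_iff hpos, ← mul_left_cancel₀ hpos h1, mul_comm]
end

section
/- Let $G$ be a finite simple connected graph on $n$ vertices. Then the sum of the effective resistances over all edges of $G$ satisfies $\sum_{(i,j) \in E} \omega(i,j) = n - 1$ (Foster's theorem). -/
open Matrix Finset

/-- **Foster's theorem.**  For a finite simple connected graph on `n` vertices, the sum
of the effective resistances over all edges (each unordered edge counted once, i.e. one
half of the sum over ordered adjacent pairs) equals `n - 1`. -/
theorem foster_theorem
    {n : ℕ} (G : SimpleGraph (Fin n)) [DecidableRel G.Adj] (hG : G.Connected)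
    (M : Matrix (Fin n) (Fin n) ℝ)
    (hM : IsMoorePenroseInverse (G.lapMatrix ℝ) M) :
    (∑ i : Fin n, ∑ j : Fin n,
        if G.Adj i j then effectiveResistance M i j else 0) / 2 = (n : ℝ) - 1 := by
  obtain ⟨h1, -, -, -⟩ := hM
  have hne := hG.nonempty
  obtain ⟨v⟩ := hne
  have hres : ∀ i j, effectiveResistance M i j = M i i + M j j - M i j - M j i := by
    intro i j
    simp [effectiveResistance, Matrix.mulVec_sub, sub_dotProduct]
    ring
  -- Q = 1 - M L has constant columns
  have hLQ : G.lapMatrix ℝ * (1 - M * G.lapMatrix ℝ) = 0 := by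
    rw [mul_sub, mul_one, ← mul_assoc, h1, sub_self]
  have hcol : ∀ i j k, (1 - M * G.lapMatrix ℝ) i k = (1 - M * G.lapMatrix ℝ) j k := by
    intro i j k
    have hk : G.lapMatrix ℝ *ᵥ (fun a => (1 - M * G.lapMatrix ℝ) a k) = 0 := by
      funext a
      exact congrFun (congrFun hLQ a) k
    exact (G.lapMatrix_mulVec_eq_zero_iff_forall_reachable.mp hk) i j (hG.preconnected i j)
  have hone : (1 - M * G.lapMatrix ℝ) *ᵥ (fun _ => (1 : ℝ)) = fun _ => 1 := by
    rw [Matrix.sub_mulVec, ← Matrix.mulVec_mulVec, G.lapMatrix_mulVec_const_eq_zero]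
    simp
  have htrQ : (1 - M * G.lapMatrix ℝ).trace = 1 := by
    have h := congrFun hone v
    simp only [Matrix.mulVec, dotProduct, mul_one] at h
    rw [← h, Matrix.trace]
    exact Finset.sum_congr rfl fun i _ => hcol i v i
  have htr : (M * G.lapMatrix ℝ).trace = (n : ℝ) - 1 := by
    rw [Matrix.trace_sub, Matrix.trace_one, Fintype.card_fin] at htrQ
    linarith
  have hexp : (M * G.lapMatrix ℝ).trace
      = ∑ i, ∑ j, (if G.Adj i j then M i i - M i j else 0) := by
    rw [Matrix.trace]
    refine Finset.sum_congr rfl fun i _ => ?_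
    have hd : (G.degree i : ℝ) = ∑ j, if G.Adj i j then (1 : ℝ) else 0 :=
      G.degree_eq_sum_if_adj i
    have e : ∀ j, (if G.Adj i j then M i i - M i j else 0)
        = M i i * (if G.Adj i j then (1 : ℝ) else 0) - M i j * (if G.Adj j i then 1 else 0) := by
      intro j
      by_cases h : G.Adj i j <;> simp [h, G.adj_comm j i]
    simp only [e, Finset.sum_sub_distrib, ← Finset.mul_sum, ← hd]
    simp [Matrix.mul_apply, SimpleGraph.lapMatrix, SimpleGraph.degMatrix, mul_sub,
      Finset.sum_sub_distrib, Matrix.diagonal_apply, SimpleGraph.adjMatrix_apply]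
  have hswap : ∑ i, ∑ j, (if G.Adj i j then M j j - M j i else 0)
      = ∑ i, ∑ j, (if G.Adj i j then M i i - M i j else 0) := by
    rw [Finset.sum_comm]
    simp only [G.adj_comm]
  have hsum : (∑ i, ∑ j, if G.Adj i j then effectiveResistance M i j else 0)
      = ∑ i, ∑ j, (if G.Adj i j then M i i - M i j else 0)
        + ∑ i, ∑ j, (if G.Adj i j then M j j - M j i else 0) := by
    simp only [← Finset.sum_add_distrib]
    refine Finset.sum_congr rfl fun i _ => Finset.sum_congr rfl fun j _ => ?_
    rw [hres]
    split_ifs <;> ring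
  rw [hsum, hswap, ← hexp, htr]
  ring
end

section
/- Let $G$ be a finite simple connected graph. For each vertex $i$, define the link resistance curvature $\rho_i = 1 - \frac{1}{2} \sum_{j \in N(i)} \omega(i,j)$, where the sum is over the neighbors of $i$. Then the total resistance curvature satisfies $\sum_{i \in V} \rho_i = 1$. -/
open Matrix Finset

/-- **The total link resistance curvature is `1`.**  For a finite simple connected graph,
with `ρᵢ = 1 - (1/2) ∑_{j ∈ N(i)} ω(i,j)` the link resistance curvature of vertex `i`,
we have `∑ᵢ ρᵢ = 1`. -/
theorem sum_link_resistance_curvature_eq_one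
    {n : ℕ} (G : SimpleGraph (Fin n)) [DecidableRel G.Adj] (hG : G.Connected)
    (M : Matrix (Fin n) (Fin n) ℝ)
    (hM : IsMoorePenroseInverse (G.lapMatrix ℝ) M) :
    ∑ i : Fin n,
        (1 - (1 / 2) * ∑ j ∈ G.neighborFinset i, effectiveResistance M i j) = 1 := by
  obtain ⟨h1, -, -, h4⟩ := hM
  set L := G.lapMatrix ℝ with hL
  have hrow : ∀ i, ∑ j, L i j = 0 := by
    intro i
    have h := congrFun (G.lapMatrix_mulVec_const_eq_zero (R := ℝ)) i
    simpa [Matrix.mulVec, dotProduct] using h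
  have hsym : ∀ i j, L i j = L j i := fun i j => (G.isSymm_lapMatrix (R := ℝ)).apply j i
  have hcol : ∀ j, ∑ i, L i j = 0 := by
    intro j
    rw [← hrow j]
    exact Finset.sum_congr rfl fun i _ => hsym i j
  -- the projection `1 - M L` has all entries equal
  have hLP : L * (1 - M * L) = 0 := by
    rw [mul_sub, mul_one, ← mul_assoc, h1, sub_self]
  have hPs : ∀ i j, (1 - M * L) i j = (1 - M * L) j i := by
    have : (1 - M * L)ᵀ = 1 - M * L := by
      rw [Matrix.transpose_sub, h4, Matrix.transpose_one]
    intro i j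
    conv_lhs => rw [← this]
    rfl
  have hPc : ∀ i i' j, (1 - M * L) i j = (1 - M * L) i' j := by
    intro i i' j
    have hz : L *ᵥ (fun k => (1 - M * L) k j) = 0 := by
      ext k
      exact congrFun (congrFun hLP k) j
    exact (G.lapMatrix_mulVec_eq_zero_iff_forall_reachable.mp hz) i i' (hG.preconnected i i')
  obtain ⟨v⟩ := hG.nonempty
  have hPr : ∑ j, (1 - M * L) v j = 1 := by
    simp only [Matrix.sub_apply, Finset.sum_sub_distrib, Matrix.mul_apply]
    rw [Finset.sum_comm]
    simp [← Finset.mul_sum, hrow, Matrix.one_apply]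
  have htr : ∑ i, ∑ j, M i j * L j i = n - 1 := by
    have h : ∑ j, (1 - M * L) v j = ∑ j, (1 - M * L) j j :=
      Finset.sum_congr rfl fun j _ => hPc v j j
    rw [hPr] at h
    simp only [Matrix.sub_apply, Finset.sum_sub_distrib, Matrix.mul_apply,
      Matrix.one_apply_eq] at h
    simp only [Finset.sum_const, Finset.card_univ, Fintype.card_fin, nsmul_eq_mul, mul_one] at h
    linarith
  have hω : ∀ i j, effectiveResistance M i j = M i i + M j j - M i j - M j i := by
    intro i j
    simp [effectiveResistance, Matrix.mulVec_sub, sub_dotProduct]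
    ring
  have hs : ∀ i, ∑ j ∈ G.neighborFinset i, effectiveResistance M i j
      = ∑ j, (M i j * L j i + M j i * L i j - M i i * L i j - M j j * L i j) := by
    intro i
    rw [SimpleGraph.neighborFinset_eq_filter, Finset.sum_filter]
    refine Finset.sum_congr rfl fun j _ => ?_
    rw [hsym j i, hω]
    by_cases hij : i = j
    · subst hij
      simp
    · have : L i j = - (if G.Adj i j then 1 else 0) := by
        simp [hL, SimpleGraph.lapMatrix, SimpleGraph.degMatrix, hij, SimpleGraph.adjMatrix_apply]
      rw [this]
      split_ifs <;> ring
  have e1 : ∑ i, ∑ j, M j i * L i j = n - 1 := by rw [Finset.sum_comm, htr]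
  have e2 : ∑ i, ∑ j, M i i * L i j = 0 := by simp [← Finset.mul_sum, hrow]
  have e3 : ∑ i, ∑ j, M j j * L i j = 0 := by
    rw [Finset.sum_comm]
    simp [← Finset.mul_sum, hcol]
  simp only [hs, Finset.sum_sub_distrib, Finset.sum_add_distrib, ← Finset.mul_sum] at *
  simp only [Finset.sum_const, Finset.card_univ, Fintype.card_fin, nsmul_eq_mul, mul_one]
  linarith
end

section
/- Let $k \ge 1$ be an integer and let $G$ be a finite simple connected graph on $n$ vertices. Then there exists a spanning subgraph $H$ of $G$ (a $(2k-1)$-spanner) such that for every pair of vertices $u, v$, the distances satisfy $d_H(u,v) \le (2k-1)\, d_G(u,v)$, and $H$ has at most $\frac{1}{2}\left(n^{1 + 1/k} + n\right)$ edges. -/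
namespace Spanner
open SimpleGraph Finset

/-- scalar tangent-line inequality -/
lemma scalar_ineq {x q : ℝ} (hx : 2 ≤ x) (hq : 1 ≤ q) :
    (q + 1) / q * (x - 1 - q) ≤ x * (Real.log (x - 1) - Real.log q) := by
  have hq0 : 0 < q := by linarith
  rw [← Real.log_div (by linarith) (by linarith)]
  obtain ⟨y, hy⟩ : ∃ y, y = (x - 1) / q := ⟨_, rfl⟩
  have hxy : x = q * y + 1 := by rw [hy]; field_simp; ring
  rw [← hy]
  have hy0 : 0 < y := by rw [hy]; apply div_pos <;> linarith
  have hqy : 1 ≤ q * y := by linarith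
  have e : (q + 1) / q * (x - 1 - q) = (q + 1) * (y - 1) := by
    rw [hxy]; field_simp; ring
  rw [e, hxy]
  have h2 : 1 - y⁻¹ ≤ Real.log y := Real.one_sub_inv_le_log_of_pos hy0
  have h3 : 0 ≤ y * Real.log y - (y - 1) := by
    have := mul_le_mul_of_nonneg_left h2 hy0.le
    rw [mul_sub, mul_inv_cancel₀ hy0.ne'] at this
    linarith
  rcases le_total 1 y with h | h
  · have h1 := Real.le_log_one_add_of_nonneg (x := y - 1) (by linarith)
    rw [show 1 + (y - 1) = y by ring, div_le_iff₀ (by linarith)] at h1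
    nlinarith
  · have hl : Real.log y ≤ 0 := Real.log_nonpos hy0.le h
    have h1 : y - y⁻¹ ≤ 2 * Real.log y := by
      have := (Real.sinh_le_self_iff (x := Real.log y)).2 hl
      rw [Real.sinh_eq, Real.exp_neg, Real.exp_log hy0] at this
      linarith
    have h4 : y * (y - y⁻¹) ≤ y * (2 * Real.log y) := mul_le_mul_of_nonneg_left h1 hy0.le
    rw [mul_sub, mul_inv_cancel₀ hy0.ne'] at h4
    have h5 := mul_le_mul_of_nonneg_right hqy h3
    have : 0 ≤ y * ((q * y + 1) * Real.log y - (q + 1) * (y - 1)) := by nlinarith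
    have := nonneg_of_mul_nonneg_right this hy0
    linarith

variable {V : Type*}

/-- all cycles are longer than `2k` -/
def LongCycles (k : ℕ) (H : SimpleGraph V) : Prop :=
  ∀ (v : V) (c : H.Walk v v), c.IsCycle → 2 * k < c.length

lemma LongCycles.mono {k : ℕ} {H H' : SimpleGraph V} (h : LongCycles k H) (hle : H' ≤ H) :
    LongCycles k H' := by
  intro v c hc
  have := h v (c.mapLe hle) (hc.mapLe hle)
  simpa using this

open Classical in
lemma LongCycles.walk {k : ℕ} {H : SimpleGraph V} (h : LongCycles k H) {v a b : V}
    (ha : H.Adj v a) (hb : H.Adj v b) (hab : a ≠ b) (p : H.Walk a b) (hp : v ∉ p.support) :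
    2 * k < p.length + 2 := by
  have hv : v ∉ p.bypass.support := fun hh => hp (p.support_bypass_subset_support hh)
  have hc : (Walk.cons ha (p.bypass.concat hb.symm)).IsCycle := by
    rw [Walk.cons_isCycle_iff, Walk.concat_isPath_iff]
    refine ⟨⟨p.bypass_isPath, hv⟩, ?_⟩
    rw [Walk.edges_concat]
    simp only [List.concat_eq_append, List.mem_append, List.mem_singleton, not_or]
    refine ⟨fun hh => hv (Walk.fst_mem_support_of_mem_edges _ hh), ?_⟩
    intro hh
    rw [Sym2.eq_swap, Sym2.congr_left] at hh
    exact hab hh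
  have := h v _ hc
  have h2 := p.length_bypass_le_length
  simp only [Walk.length_cons, Walk.length_concat] at this
  omega

/-- number of non-backtracking extensions -/
noncomputable def F [Fintype V] (H : SimpleGraph V) : ℕ → V → V → ℝ
  | 0, _, _ => 1
  | i + 1, u, v => by
      classical exact ∑ a ∈ (H.neighborFinset v).erase u, F H i v a

open Classical in
lemma F_succ [Fintype V] (H : SimpleGraph V) (i : ℕ) (u v : V) :
    F H (i+1) u v = ∑ a ∈ (H.neighborFinset v).erase u, F H i v a := by
  simp only [F]

open Classical in
noncomputable def E [Fintype V] (H : SimpleGraph V) (i : ℕ) (u v : V) : Finset V :=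
  Finset.univ.filter fun w => (∃ p : H.Walk v w, p.length = i) ∧ ∀ q : H.Walk u w, i + 1 ≤ q.length

open Classical in
lemma E_disj [Fintype V] {k : ℕ} {H : SimpleGraph V} (h : LongCycles k H) {i : ℕ} (hi : i + 1 ≤ k)
    {v a b : V} (ha : H.Adj v a) (hb : H.Adj v b) (hab : a ≠ b) :
    Disjoint (E H i v a) (E H i v b) := by
  rw [Finset.disjoint_left]
  intro w hwa hwb
  simp only [E, mem_filter, mem_univ, true_and] at hwa hwb
  obtain ⟨⟨p, hp⟩, hq⟩ := hwa
  obtain ⟨⟨p', hp'⟩, -⟩ := hwb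
  have := h.walk ha hb hab (p.append p'.reverse) (by
    rw [Walk.mem_support_append_iff, Walk.support_reverse, List.mem_reverse]
    rintro (hh | hh)
    · have := hq (p.dropUntil v hh)
      have := p.length_dropUntil_le_length hh
      omega
    · have := hq (p'.dropUntil v hh)
      have := p'.length_dropUntil_le_length hh
      omega)
  simp only [Walk.length_append, Walk.length_reverse] at this
  omega

open Classical in
lemma E_sub [Fintype V] {k : ℕ} {H : SimpleGraph V} (h : LongCycles k H) {i : ℕ} (hi : i + 2 ≤ k)
    {u v a : V} (hu : H.Adj v u) (ha : H.Adj v a) (hau : a ≠ u) :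
    E H i v a ⊆ E H (i+1) u v := by
  intro w hwa
  simp only [E, mem_filter, mem_univ, true_and] at hwa ⊢
  obtain ⟨⟨p, hp⟩, hq⟩ := hwa
  refine ⟨⟨Walk.cons ha p, by simp [hp]⟩, fun q => ?_⟩
  by_contra hlt
  have := h.walk ha hu hau (p.append q.reverse) (by
    rw [Walk.mem_support_append_iff, Walk.support_reverse, List.mem_reverse]
    rintro (hh | hh)
    · have := hq (p.dropUntil v hh)
      have := p.length_dropUntil_le_length hh
      omega
    · have := hq (q.dropUntil v hh)
      have := Walk.length_dropUntil_lt_length hh hu.ne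
      omega)
  simp only [Walk.length_append, Walk.length_reverse] at this
  omega

open Classical in
lemma F_le_E [Fintype V] {k : ℕ} {H : SimpleGraph V} (h : LongCycles k H) (i : ℕ) :
    ∀ (_ : i + 1 ≤ k) (u v : V) (_ : H.Adj v u), F H i u v ≤ (E H i u v).card := by
  induction i with
  | zero =>
    intro _ u v hu
    simp only [F, Nat.one_le_cast]
    refine Finset.card_pos.2 ⟨v, ?_⟩
    simp only [E, mem_filter, mem_univ, true_and]
    refine ⟨⟨Walk.nil, rfl⟩, fun q => ?_⟩
    by_contra hh
    exact hu.ne (Walk.eq_of_length_eq_zero (p := q) (by omega)).symm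
  | succ i ih =>
    intro hi u v hu
    rw [F_succ]
    calc _ ≤ ∑ a ∈ (H.neighborFinset v).erase u, ((E H i v a).card : ℝ) := by
          refine Finset.sum_le_sum fun a ha => ih (by omega) v a ?_
          simp at ha
          exact ha.2.symm
      _ = (((H.neighborFinset v).erase u).biUnion (fun a => E H i v a)).card := by
          rw [Finset.card_biUnion]
          · push_cast; rfl
          · intro a ha b hb hab
            simp at ha hb
            exact E_disj h (by omega) ha.1 hb.1 hab
      _ ≤ _ := by
          norm_cast
          refine Finset.card_le_card (Finset.biUnion_subset.2 fun a ha => ?_)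
          simp at ha
          exact E_sub h (by omega) hu ha.2 ha.1

open Classical in
lemma F_le [Fintype V] {k : ℕ} {H : SimpleGraph V} (h : LongCycles k H) (hk : 1 ≤ k)
    (u v : V) : F H k u v ≤ Fintype.card V := by
  obtain ⟨i, rfl⟩ : ∃ i, k = i + 1 := ⟨k - 1, by omega⟩
  rw [F_succ]
  calc _ ≤ ∑ a ∈ (H.neighborFinset v).erase u, ((E H i v a).card : ℝ) := by
        refine Finset.sum_le_sum fun a ha => F_le_E h i (by omega) v a ?_
        simp at ha
        exact ha.2.symm
    _ = (((H.neighborFinset v).erase u).biUnion (fun a => E H i v a)).card := by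
        rw [Finset.card_biUnion]
        · push_cast; rfl
        · intro a ha b hb hab
          simp at ha hb
          exact E_disj h (by omega) ha.1 hb.1 hab
    _ ≤ _ := by
        norm_cast
        exact Finset.card_le_univ _

lemma jensen_log {ι : Type*} (s : Finset ι) (hs : s.Nonempty) (f : ι → ℝ) (hf : ∀ i ∈ s, 0 < f i) :
    Real.log s.card + (1 / (s.card : ℝ)) * ∑ i ∈ s, Real.log (f i) ≤ Real.log (∑ i ∈ s, f i) := by
  have hc : (0:ℝ) < s.card := by exact_mod_cast hs.card_pos
  have hpos : 0 < ∑ i ∈ s, f i := Finset.sum_pos hf hs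
  have := strictConcaveOn_log_Ioi.concaveOn.le_map_sum (t := s) (w := fun _ => 1 / (s.card : ℝ))
    (p := f) (fun _ _ => by positivity) (by simp; field_simp) hf
  simp only [smul_eq_mul, ← Finset.mul_sum] at this
  rw [Real.log_mul (by positivity) hpos.ne', one_div, Real.log_inv] at this
  rw [one_div]
  linarith

open Classical in
lemma F_pos [Fintype V] {H : SimpleGraph V} (hd : ∀ v, H.degree v = 0 ∨ 2 ≤ H.degree v) (i : ℕ) :
    ∀ (u v : V) (_ : H.Adj v u), 0 < F H i u v := by
  induction i with
  | zero => intro u v _; simp [F]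
  | succ i ih =>
    intro u v hu
    rw [F_succ]
    refine Finset.sum_pos (fun a ha => ih v a ?_) ?_
    · simp at ha; exact ha.2.symm
    · rw [← Finset.card_pos, Finset.card_erase_of_mem (by simpa using hu), card_neighborFinset_eq_degree]
      have := (H.degree_pos_iff_exists_adj v).2 ⟨u, hu⟩
      have := hd v
      omega

open Classical in
lemma sum_swap [Fintype V] (H : SimpleGraph V) (g : V → V → ℝ) :
    ∑ v, ∑ a ∈ H.neighborFinset v, g v a = ∑ v, ∑ u ∈ H.neighborFinset v, g u v := by
  refine Finset.sum_comm' ?_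
  intro x y
  simp [H.adj_comm]

open Classical in
lemma sum_log_step [Fintype V] {H : SimpleGraph V} (hd : ∀ v, H.degree v = 0 ∨ 2 ≤ H.degree v)
    (i : ℕ) :
    ∑ v, (H.degree v : ℝ) * Real.log (H.degree v - 1) +
      ∑ v, ∑ u ∈ H.neighborFinset v, Real.log (F H i u v) ≤
      ∑ v, ∑ u ∈ H.neighborFinset v, Real.log (F H (i+1) u v) := by
  rw [← sum_swap H (fun u v => Real.log (F H i u v)), ← Finset.sum_add_distrib]
  refine Finset.sum_le_sum fun v _ => ?_
  rcases hd v with h0 | h2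
  · have : H.neighborFinset v = ∅ := by
      rw [← Finset.card_eq_zero, card_neighborFinset_eq_degree, h0]
    simp [h0, this]
  have h2' : (2:ℝ) ≤ H.degree v := by exact_mod_cast h2
  set g : V → ℝ := fun a => Real.log (F H i v a) with hg
  calc (H.degree v : ℝ) * Real.log (H.degree v - 1) + ∑ a ∈ H.neighborFinset v, g a
      = ∑ u ∈ H.neighborFinset v, (Real.log (H.degree v - 1) +
          (1 / ((H.degree v : ℝ) - 1)) * ((∑ a ∈ H.neighborFinset v, g a) - g u)) := by
        rw [Finset.sum_add_distrib, ← Finset.mul_sum, Finset.sum_sub_distrib]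
        simp only [Finset.sum_const, card_neighborFinset_eq_degree, nsmul_eq_mul]
        have : (H.degree v : ℝ) - 1 ≠ 0 := by linarith
        field_simp
    _ ≤ _ := by
        refine Finset.sum_le_sum fun u hu => ?_
        have hc : (((H.neighborFinset v).erase u).card : ℝ) = H.degree v - 1 := by
          rw [Finset.card_erase_of_mem hu, card_neighborFinset_eq_degree, Nat.cast_sub (by omega)]
          simp
        have := jensen_log ((H.neighborFinset v).erase u) (by
          rw [← Finset.card_pos]
          have : (0:ℝ) < (((H.neighborFinset v).erase u).card : ℝ) := by rw [hc]; linarith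
          exact_mod_cast this) (fun a => F H i v a) (fun a ha => F_pos hd i v a (by
            simp at ha; exact ha.2.symm))
        rw [hc, ← F_succ, Finset.sum_erase_eq_sub hu] at this
        exact this

open Classical in
lemma sum_log [Fintype V] {H : SimpleGraph V} (hd : ∀ v, H.degree v = 0 ∨ 2 ≤ H.degree v)
    (i : ℕ) :
    (i : ℝ) * ∑ v, (H.degree v : ℝ) * Real.log (H.degree v - 1) ≤
      ∑ v, ∑ u ∈ H.neighborFinset v, Real.log (F H i u v) := by
  induction i with
  | zero => simp [F]
  | succ i ih =>
    have := sum_log_step hd i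
    push_cast
    linarith

open Classical in
lemma edge_bound_core [Fintype V] {k : ℕ} {H : SimpleGraph V} (h : LongCycles k H) (hk : 1 ≤ k)
    (hd : ∀ v, H.degree v = 0 ∨ 2 ≤ H.degree v) {q : ℝ} (hq : 1 ≤ q)
    (hqk : q ^ k = Fintype.card V) :
    (∑ v, (H.degree v : ℝ)) ≤ (univ.filter fun v => 0 < H.degree v).card * (1 + q) := by
  have h1 := sum_log hd k
  have h2 : ∑ v, ∑ u ∈ H.neighborFinset v, Real.log (F H k u v) ≤
      ∑ v, (H.degree v : ℝ) * (k * Real.log q) := by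
    refine Finset.sum_le_sum fun v _ => ?_
    rw [← card_neighborFinset_eq_degree, ← nsmul_eq_mul]
    refine Finset.sum_le_card_nsmul _ _ _ fun u hu => ?_
    rw [← Real.log_pow, hqk]
    exact Real.log_le_log (F_pos hd k u v (by simpa using hu)) (F_le h hk u v)
  have hk0 : (0:ℝ) < k := by exact_mod_cast hk
  have h3 : ∑ v, (H.degree v : ℝ) * (Real.log (H.degree v - 1) - Real.log q) ≤ 0 := by
    have : k * ∑ v, (H.degree v : ℝ) * (Real.log (H.degree v - 1) - Real.log q) ≤ 0 := by
      simp only [mul_sub, Finset.sum_sub_distrib]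
      have e : ∑ v, (H.degree v : ℝ) * (k * Real.log q) = k * ∑ v, (H.degree v : ℝ) * Real.log q := by
        rw [Finset.mul_sum]; exact Finset.sum_congr rfl fun _ _ => by ring
      linarith
    exact nonpos_of_mul_nonpos_right this hk0
  have h4 : (q + 1) / q * (∑ v ∈ univ.filter (fun v => 0 < H.degree v), ((H.degree v : ℝ) - 1 - q)) ≤ 0 := by
    refine le_trans ?_ h3
    rw [Finset.mul_sum, Finset.sum_filter]
    refine Finset.sum_le_sum fun v _ => ?_
    split_ifs with hv
    · refine scalar_ineq ?_ hq
      have : 2 ≤ H.degree v := by have := hd v; omega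
      exact_mod_cast this
    · have : H.degree v = 0 := by omega
      simp [this]
  have h5 := nonpos_of_mul_nonpos_right h4 (by positivity)
  have h6 : ∑ v ∈ univ.filter (fun v => 0 < H.degree v), (H.degree v : ℝ) = ∑ v, (H.degree v : ℝ) := by
    rw [Finset.sum_filter]
    refine Finset.sum_congr rfl fun v _ => ?_
    split_ifs with hv
    · rfl
    · have : H.degree v = 0 := by omega
      simp [this]
  simp only [sub_sub, Finset.sum_sub_distrib, Finset.sum_const, nsmul_eq_mul, h6] at h5
  linarith

open Classical in
lemma edge_bound [Fintype V] {k : ℕ} (hk : 1 ≤ k) {q : ℝ} (hq : 1 ≤ q)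
    (hqk : q ^ k = Fintype.card V) (m : ℕ) : ∀ (H : SimpleGraph V) (_ : LongCycles k H)
    (_ : H.edgeFinset.card = m),
    2 * (m : ℝ) ≤ (univ.filter fun v => 0 < H.degree v).card * (1 + q) := by
  induction m with
  | zero => intro H _ _; simp; positivity
  | succ m ih =>
    intro H h hm
    by_cases hd : ∀ v, H.degree v = 0 ∨ 2 ≤ H.degree v
    · have := edge_bound_core h hk hd hq hqk
      have h2 := H.sum_degrees_eq_twice_card_edges
      rw [hm] at h2
      have h3 : (∑ v, (H.degree v : ℝ)) = 2 * ((m + 1 : ℕ) : ℝ) := by exact_mod_cast h2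
      rw [← h3]; exact this
    · push Not at hd
      obtain ⟨u, hu0, hu2⟩ := hd
      obtain ⟨v, hv⟩ := (H.degree_pos_iff_exists_adj u).1 (by omega)
      have huniq : ∀ w, H.Adj u w → w = v := by
        intro w hw
        have : H.degree u ≤ 1 := by omega
        rw [← card_neighborFinset_eq_degree, Finset.card_le_one] at this
        exact this w (by simpa using hw) v (by simpa using hv)
      obtain ⟨H', hH'⟩ : ∃ H', H' = H.deleteEdges {s(u, v)} := ⟨_, rfl⟩
      have hle : H' ≤ H := hH' ▸ H.deleteEdges_le _
      have hcard : H'.edgeFinset.card = m := by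
        have e : H'.edgeFinset = H.edgeFinset.erase s(u,v) := by
          ext e
          simp only [mem_edgeFinset, hH', edgeSet_deleteEdges, Set.mem_sdiff, Set.mem_singleton_iff, mem_erase]
          tauto
        rw [e, Finset.card_erase_of_mem (by simpa using hv), hm]
        rfl
      have hI := ih H' (h.mono hle) hcard
      have hsub : (univ.filter fun v => 0 < H'.degree v) ⊆ (univ.filter fun v => 0 < H.degree v).erase u := by
        intro w hw
        simp only [mem_filter, mem_univ, true_and, mem_erase, degree_pos_iff_exists_adj] at hw ⊢
        obtain ⟨x, hx⟩ := hw
        refine ⟨?_, x, hle hx⟩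
        rintro rfl
        have := huniq x (hle hx)
        subst this
        simp [hH'] at hx
      have hc := Finset.card_le_card hsub
      have hmem : u ∈ (univ.filter fun v => 0 < H.degree v) := by simp; omega
      have hc2 := Finset.card_erase_add_one hmem
      have hc3 : ((univ.filter fun v => 0 < H'.degree v).card : ℝ) + 1 ≤ (univ.filter fun v => 0 < H.degree v).card := by
        exact_mod_cast (by omega)
      push_cast
      nlinarith

open Classical in
/-- in a maximal graph with long cycles, edges of `G` are short-cut -/
lemma exists_maximal [Fintype V] {k : ℕ} (hk : 1 ≤ k) (G : SimpleGraph V) :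
    ∃ H ≤ G, LongCycles k H ∧ ∀ u v, G.Adj u v → ∃ p : H.Walk u v, p.length ≤ 2 * k - 1 := by
  obtain ⟨H, hH⟩ := (Set.toFinite {H : SimpleGraph V | H ≤ G ∧ LongCycles k H}).exists_maximal
    ⟨⊥, bot_le, by
      intro v c hc
      cases c with
      | nil => exact absurd rfl hc.ne_nil
      | cons h _ => exact absurd h (by simp)⟩
  refine ⟨H, hH.prop.1, hH.prop.2, fun u v huv => ?_⟩
  by_cases hadj : H.Adj u v
  · exact ⟨hadj.toWalk, by simp; omega⟩
  by_contra hno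
  push Not at hno
  have hlong : LongCycles k (H ⊔ edge u v) := by
    intro x c hc
    by_contra hlen
    -- edges of the sum
    have hedge : ∀ e ∈ (H ⊔ edge u v).edgeSet, e ≠ s(u,v) → e ∈ H.edgeSet := by
      intro e he hne
      rw [edgeSet_sup, edgeSet_edge_of_ne huv.ne] at he
      rcases he with he | he
      · exact he
      · exact absurd he hne
    by_cases hmem : s(u,v) ∈ c.edges
    · have hu : u ∈ c.support := c.fst_mem_support_of_mem_edges hmem
      set c' := c.rotate u hu with hc'
      have hcyc : c'.IsCycle := hc.rotate hu
      have hl : c'.length = c.length := c.length_rotate u hu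
      have hv' : v ∈ c'.support := by
        refine c'.snd_mem_support_of_mem_edges (t := u) ?_
        rw [hc', (c.rotate_edges u hu).mem_iff]; exact hmem
      have hspec := c'.take_spec hv'
      have hnd := hcyc.edges_nodup
      have hlen2 : (c'.takeUntil v hv').length + (c'.dropUntil v hv').length = c'.length := by
        conv_rhs => rw [← hspec, Walk.length_append]
      rw [← hspec, Walk.edges_append, List.nodup_append] at hnd
      have hpos1 : (c'.takeUntil v hv').length ≠ 0 := fun h0 => huv.ne (Walk.eq_of_length_eq_zero h0)
      have hpos2 : (c'.dropUntil v hv').length ≠ 0 := fun h0 => huv.ne (Walk.eq_of_length_eq_zero h0).symm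
      by_cases h1 : s(u,v) ∈ (c'.takeUntil v hv').edges
      · have h2 : s(u,v) ∉ (c'.dropUntil v hv').edges := fun h2 => hnd.2.2 _ h1 _ h2 rfl
        have := hno ((c'.dropUntil v hv').transfer H (fun e he => hedge e (Walk.edges_subset_edgeSet _ he)
          (fun hh => h2 (hh ▸ he)))).reverse
        simp only [Walk.length_reverse, Walk.length_transfer] at this
        omega
      · have := hno ((c'.takeUntil v hv').transfer H (fun e he => hedge e (Walk.edges_subset_edgeSet _ he)
          (fun hh => h1 (hh ▸ he))))
        simp only [Walk.length_transfer] at this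
        omega
    · have hs : ∀ e ∈ c.edges, e ∈ H.edgeSet := fun e he => hedge e (Walk.edges_subset_edgeSet _ he)
          (fun hh => hmem (hh ▸ he))
      have := hH.prop.2 x (c.transfer H hs) (hc.transfer hs)
      simp only [Walk.length_transfer] at this
      omega
  have hle : H ⊔ edge u v ≤ G := sup_le hH.prop.1 (by
    intro a b hab
    rw [edge_adj] at hab
    rcases hab.1 with ⟨rfl, rfl⟩ | ⟨rfl, rfl⟩
    · exact huv
    · exact huv.symm)
  have := hH.le_of_ge (y := H ⊔ edge u v) ⟨hle, hlong⟩ le_sup_left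
  exact hadj (this (Or.inr (by rw [edge_adj]; exact ⟨by simp, huv.ne⟩)))

lemma walk_stretch {G H : SimpleGraph V} {t : ℕ}
    (h : ∀ u v, G.Adj u v → ∃ p : H.Walk u v, p.length ≤ t) {u v : V} (p : G.Walk u v) :
    ∃ q : H.Walk u v, q.length ≤ t * p.length := by
  induction p with
  | nil => exact ⟨Walk.nil, by simp⟩
  | cons hadj _ ih =>
    obtain ⟨q, hq⟩ := ih
    obtain ⟨r, hr⟩ := h _ _ hadj
    refine ⟨r.append q, ?_⟩
    rw [Walk.length_append, Walk.length_cons, mul_add]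
    omega

end Spanner

/-- **Greedy `(2k-1)`-spanners.**  Every finite simple connected graph `G` on `n`
vertices has a connected spanning subgraph `H` with
`d_H(u,v) ≤ (2k-1) d_G(u,v)` for all vertices `u, v`, and with at most
`(n^{1+1/k} + n) / 2` edges. -/
theorem exists_spanner
    {n : ℕ} (k : ℕ) (hk : 1 ≤ k) (G : SimpleGraph (Fin n)) (hG : G.Connected) :
    ∃ H : SimpleGraph (Fin n), H ≤ G ∧ H.Connected ∧
      (∀ u v : Fin n, H.dist u v ≤ (2 * k - 1) * G.dist u v) ∧
      (H.edgeSet.ncard : ℝ) ≤ ((n : ℝ) ^ ((1 : ℝ) + 1 / (k : ℝ)) + (n : ℝ)) / 2 := by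
  classical
  obtain ⟨H, hle, hlong, hst⟩ := Spanner.exists_maximal hk G
  have hne := hG.nonempty
  have hn : 1 ≤ n := by
    obtain ⟨x⟩ := hne
    have := x.2
    omega
  have hn' : (1:ℝ) ≤ n := by exact_mod_cast hn
  refine ⟨H, hle, ?_, ?_, ?_⟩
  · refine (SimpleGraph.connected_iff _).2 ⟨fun u v => ?_, hne⟩
    obtain ⟨p⟩ := hG.preconnected u v
    obtain ⟨q, -⟩ := Spanner.walk_stretch hst p
    exact ⟨q⟩
  · intro u v
    obtain ⟨p, hp⟩ := hG.exists_walk_length_eq_dist u v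
    obtain ⟨q, hq⟩ := Spanner.walk_stretch hst p
    rw [← hp]
    exact (SimpleGraph.dist_le q).trans hq
  · have hk0 : (k:ℝ) ≠ 0 := by positivity
    have hq1 : (1:ℝ) ≤ (n:ℝ) ^ (1 / (k:ℝ)) := Real.one_le_rpow hn' (by positivity)
    have hqk : ((n:ℝ) ^ (1 / (k:ℝ))) ^ k = Fintype.card (Fin n) := by
      rw [← Real.rpow_natCast, ← Real.rpow_mul (by positivity), one_div_mul_cancel hk0]
      simp
    have hb := Spanner.edge_bound hk hq1 hqk _ H hlong rfl
    have hc : (((Finset.univ.filter fun v => 0 < H.degree v).card : ℕ) : ℝ) ≤ n := by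
      have := Finset.card_le_univ (Finset.univ.filter fun v => 0 < H.degree v)
      rw [Fintype.card_fin] at this
      exact_mod_cast this
    have he : (H.edgeSet.ncard : ℝ) = H.edgeFinset.card := by
      rw [← SimpleGraph.coe_edgeFinset, Set.ncard_coe_finset]
    rw [he, Real.rpow_add (by linarith), Real.rpow_one]
    nlinarith
end
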